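/- For every m ≥ 1, the covering type of complex projective space ℂP^m satisfies ct(ℂP^m) ≥ (m+1)²; that is, for every topological space Y homotopy equivalent to ℂP^m and every good cover U of Y, U has at least (m+1)² members. -/

import Mathlib

/-- A good cover of `Y`: a finite family of open subsets covering `Y` such that every
nonempty intersection of (finitely many) members is contractible. -/
def IsGoodCover {Y : Type*} [TopologicalSpace Y] (U : Finset (Set Y)) : Prop :=
  (∀ s ∈ U, IsOpen s) ∧ (⋃₀ (U : Set (Set Y)) = Set.univ) ∧
    ∀ T ⊆ U, T.Nonempty → (⋂₀ (T : Set (Set Y))).Nonempty →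
      ContractibleSpace ↥(⋂₀ (T : Set (Set Y)))

/-- Complex projective space `ℂP^m`: the projectivization of `ℂ^{m+1}`, i.e. the quotient
of `ℂ^{m+1} ∖ {0}` by the scalar action of `ℂ ∖ {0}`. -/
def CP (m : ℕ) : Type := Projectivization ℂ (Fin (m + 1) → ℂ)

/-- The quotient topology on `ℂP^m`. -/
instance (m : ℕ) : TopologicalSpace (CP m) :=
  inferInstanceAs (TopologicalSpace
    (Quotient (projectivizationSetoid ℂ (Fin (m + 1) → ℂ))))


namespace CT

abbrev Ch (α : Type*) := List α →₀ ZMod 2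

noncomputable section

lemma z2_add_self (a : ZMod 2) : a + a = 0 := CharTwo.add_self_eq_zero a

lemma ch_add_self {α : Type*} (c : Ch α) : c + c = 0 := by
  ext l; simpa using z2_add_self (c l)

def cn {α : Type*} (v : α) : Ch α →ₗ[ZMod 2] Ch α := Finsupp.lmapDomain _ _ (List.cons v)

@[simp] lemma cn_single {α : Type*} (v : α) (l : List α) (a : ZMod 2) :
    cn v (Finsupp.single l a) = Finsupp.single (v :: l) a := by
  simp [cn]

def bdl {α : Type*} : List α → Ch α
  | [] => 0
  | v :: l => Finsupp.single l 1 + cn v (bdl l)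

/-- Linear extension. -/
def lx {α : Type*} {M : Type*} [AddCommGroup M] [Module (ZMod 2) M] (f : List α → M) :
    Ch α →ₗ[ZMod 2] M := Finsupp.linearCombination (ZMod 2) f

@[simp] lemma lx_single {α : Type*} {M : Type*} [AddCommGroup M] [Module (ZMod 2) M]
    (f : List α → M) (l : List α) (a : ZMod 2) : lx f (Finsupp.single l a) = a • f l := by
  simp [lx]

def bd {α : Type*} : Ch α →ₗ[ZMod 2] Ch α := lx bdl

def mp {α β : Type*} (f : α → β) : Ch α →ₗ[ZMod 2] Ch β := Finsupp.lmapDomain _ _ (List.map f)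

@[simp] lemma mp_single {α β : Type*} (f : α → β) (l : List α) (a : ZMod 2) :
    mp f (Finsupp.single l a) = Finsupp.single (l.map f) a := by
  simp [mp]

/-- linear maps on chains agree if they agree on lists -/
lemma ch_ext {α : Type*} {M : Type*} [AddCommGroup M] [Module (ZMod 2) M]
    {f g : Ch α →ₗ[ZMod 2] M} (h : ∀ l, f (Finsupp.single l 1) = g (Finsupp.single l 1)) : f = g := by
  apply Finsupp.lhom_ext'
  intro l
  ext
  simpa using h l

/-- chains supported on lists satisfying P -/
def Sp {α : Type*} (P : List α → Prop) : Submodule (ZMod 2) (Ch α) :=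
  Finsupp.supported (ZMod 2) (ZMod 2) {l | P l}

lemma single_mem_Sp {α : Type*} {P : List α → Prop} {l : List α} (h : P l) (a : ZMod 2) :
    Finsupp.single l a ∈ Sp P := Finsupp.single_mem_supported _ _ h

lemma Sp_induction {α : Type*} {P : List α → Prop} {M : Type*} [AddCommGroup M] [Module (ZMod 2) M]
    (N : Submodule (ZMod 2) M) (f : Ch α →ₗ[ZMod 2] M)
    (h : ∀ l, P l → f (Finsupp.single l 1) ∈ N) {c : Ch α} (hc : c ∈ Sp P) : f c ∈ N := by
  have : Sp P ≤ N.comap f := by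
    unfold Sp
    rw [Finsupp.supported_eq_span_single, Submodule.span_le]
    rintro _ ⟨l, hl, rfl⟩
    exact h l hl
  exact this hc

lemma Sp_eq {α : Type*} {P : List α → Prop} {M : Type*} [AddCommGroup M] [Module (ZMod 2) M]
    (f g : Ch α →ₗ[ZMod 2] M)
    (h : ∀ l, P l → f (Finsupp.single l 1) = g (Finsupp.single l 1)) {c : Ch α} (hc : c ∈ Sp P) :
    f c = g c := by
  have := Sp_induction (P := P) ⊥ (f - g) (fun l hl => by simp [h l hl]) hc
  simpa [sub_eq_zero] using this

lemma Sp_mono {α : Type*} {P Q : List α → Prop} (h : ∀ l, P l → Q l) {c : Ch α} (hc : c ∈ Sp P) :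
    c ∈ Sp Q := Sp_induction (P := P) (Sp Q) LinearMap.id (fun l hl => single_mem_Sp (h l hl) 1) hc

@[simp] lemma bd_single {α : Type*} (l : List α) : bd (Finsupp.single l 1) = bdl l := by
  simp [bd]

lemma bd_cn {α : Type*} (v : α) (c : Ch α) : bd (cn v c) = c + cn v (bd c) := by
  have : bd ∘ₗ cn v = LinearMap.id + cn v ∘ₗ bd := by
    apply ch_ext; intro l; simp [bdl]
  exact LinearMap.congr_fun this c

lemma bd_bdl {α : Type*} (l : List α) : bd (bdl l) = 0 := by
  induction l with
  | nil => simp [bdl]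
  | cons v l ih => simp [bdl, bd_cn, ih, ch_add_self]

lemma bd_bd {α : Type*} (c : Ch α) : bd (bd c) = 0 := by
  have : bd ∘ₗ bd = (0 : Ch α →ₗ[ZMod 2] Ch α) := by
    apply ch_ext; intro l; simp [bd_bdl]
  exact LinearMap.congr_fun this c

lemma mp_cn {α β : Type*} (f : α → β) (v : α) (c : Ch α) : mp f (cn v c) = cn (f v) (mp f c) := by
  have : mp f ∘ₗ cn v = cn (f v) ∘ₗ mp f := by
    apply ch_ext; intro l; simp
  exact LinearMap.congr_fun this c

lemma bd_mp {α β : Type*} (f : α → β) (c : Ch α) : bd (mp f c) = mp f (bd c) := by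
  have : bd ∘ₗ mp f = mp f ∘ₗ bd := by
    apply ch_ext; intro l
    induction l with
    | nil => simp [bdl]
    | cons v l ih =>
      simp only [LinearMap.comp_apply, mp_single, bd_single, List.map_cons, bdl, map_add, mp_cn] at ih ⊢
      rw [ih]
  exact LinearMap.congr_fun this c

lemma bdl_mem {α : Type*} (l : List α) :
    bdl l ∈ Sp (fun t => t.Sublist l ∧ t.length + 1 = l.length) := by
  induction l with
  | nil => simp [bdl]
  | cons v l ih =>
    refine Submodule.add_mem _ (single_mem_Sp ⟨List.sublist_cons_self v l, by simp⟩ 1) ?_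
    refine Sp_induction _ (cn v) (fun t ht => ?_) ih
    rw [cn_single]
    exact single_mem_Sp ⟨ht.1.cons_cons v, by simp [ht.2]⟩ 1

/-- prism operator -/
def prl {α β : Type*} (f g : α → β) : List α → Ch β
  | [] => 0
  | v :: l => Finsupp.single (f v :: g v :: l.map g) 1 + cn (f v) (prl f g l)

def pr {α β : Type*} (f g : α → β) : Ch α →ₗ[ZMod 2] Ch β := lx (prl f g)

@[simp] lemma pr_single {α β : Type*} (f g : α → β) (l : List α) :
    pr f g (Finsupp.single l 1) = prl f g l := by simp [pr]

lemma pr_cn {α β : Type*} (f g : α → β) (v : α) (c : Ch α) :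
    pr f g (cn v c) = cn (f v) (cn (g v) (mp g c)) + cn (f v) (pr f g c) := by
  have : pr f g ∘ₗ cn v = cn (f v) ∘ₗ cn (g v) ∘ₗ mp g + cn (f v) ∘ₗ pr f g := by
    apply ch_ext; intro l; simp [prl]
  exact LinearMap.congr_fun this c

lemma ch_swap {α : Type*} {a b c : Ch α} (h : a + b = c) : a = c + b := by
  rw [← h, add_assoc, ch_add_self, add_zero]

lemma pr_aux {M : Type*} [AddCommGroup M] (h : ∀ x : M, x + x = 0) (a b c d e k : M) :
    a + (b + c) + (d + (e + b + k)) + (d + (c + k)) = e + a := by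
  have : a + (b + c) + (d + (e + b + k)) + (d + (c + k)) =
      e + a + (b + b) + (c + c) + (d + d) + (k + k) := by abel
  rw [this]; simp [h]

lemma bd_pr {α β : Type*} (f g : α → β) (c : Ch α) :
    bd (pr f g c) + pr f g (bd c) = mp f c + mp g c := by
  have : bd ∘ₗ pr f g + pr f g ∘ₗ bd = mp f + mp g := by
    apply ch_ext; intro l
    induction l with
    | nil => simp [bdl, prl, ch_add_self]
    | cons v l ih =>
      simp only [LinearMap.add_apply, LinearMap.comp_apply, pr_single, bd_single, mp_single] at ih ⊢
      have h2 := ch_swap ih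
      have h3 : bdl (l.map g) = mp g (bdl l) := by
        have := bd_mp g (Finsupp.single l 1)
        simpa using this
      simp only [prl, bdl, map_add, bd_cn, bd_single, pr_cn, pr_single, cn_single, h2, h3, List.map_cons]
      exact pr_aux (ch_add_self) _ _ _ _ _ _
  exact LinearMap.congr_fun this c

/-- cochain differential -/
def dd {α : Type*} : (List α → ZMod 2) → List α → ZMod 2
  | _, [] => 0
  | x, v :: l => x l + dd (fun t => x (v :: t)) l

lemma lx_cn {α : Type*} (x : List α → ZMod 2) (v : α) (c : Ch α) :
    lx x (cn v c) = lx (fun t => x (v :: t)) c := by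
  have : lx x ∘ₗ cn v = lx (fun t => x (v :: t)) := by
    apply ch_ext; intro l; simp
  exact LinearMap.congr_fun this c

lemma dd_eq {α : Type*} (x : List α → ZMod 2) (l : List α) : dd x l = lx x (bdl l) := by
  induction l generalizing x with
  | nil => simp [dd, bdl]
  | cons v l ih => simp [dd, bdl, lx_cn, ih]

lemma lx_dd {α : Type*} (x : List α → ZMod 2) (c : Ch α) : lx (dd x) c = lx x (bd c) := by
  have : lx (dd x) = lx x ∘ₗ bd := by
    apply ch_ext; intro l; simp [dd_eq]
  exact LinearMap.congr_fun this c

lemma dd_dd {α : Type*} (x : List α → ZMod 2) (l : List α) : dd (dd x) l = 0 := by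
  rw [dd_eq, lx_dd, bd_bdl, map_zero]

lemma dd_add {α : Type*} (x y : List α → ZMod 2) (l : List α) :
    dd (fun t => x t + y t) l = dd x l + dd y l := by
  induction l generalizing x y with
  | nil => simp [dd]
  | cons v l ih => simp only [dd, ih]; ring

lemma dd_mul {α : Type*} (a : ZMod 2) (y : List α → ZMod 2) (l : List α) :
    dd (fun t => a * y t) l = a * dd y l := by
  induction l generalizing y with
  | nil => simp [dd]
  | cons v l ih => simp only [dd, ih]; ring

lemma dd_zero {α : Type*} (l : List α) : dd (fun _ => 0) l = 0 := by
  induction l with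
  | nil => simp [dd]
  | cons v l ih => simp [dd, ih]

lemma dd_congr {α : Type*} {x y : List α → ZMod 2} {l : List α}
    (h : ∀ t, t.Sublist l → x t = y t) : dd x l = dd y l := by
  rw [dd_eq, dd_eq]
  exact Sp_eq _ _ (fun t ht => by simp [h t ht.1]) (bdl_mem l)

/-! ### sorting -/
variable {ι : Type*} (r : ι → ℕ)

def insl (v : ι) : List ι → Ch ι
  | [] => Finsupp.single [v] 1
  | a :: l => if r v < r a then Finsupp.single (v :: a :: l) 1 else
      if r v = r a then 0 else cn a (insl v l)

def ins (v : ι) : Ch ι →ₗ[ZMod 2] Ch ι := lx (insl r v)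

@[simp] lemma ins_single (v : ι) (l : List ι) : ins r v (Finsupp.single l 1) = insl r v l := by
  simp [ins]

def srl : List ι → Ch ι
  | [] => Finsupp.single [] 1
  | v :: l => ins r v (srl l)

def sr : Ch ι →ₗ[ZMod 2] Ch ι := lx (srl r)

@[simp] lemma sr_single (l : List ι) : sr r (Finsupp.single l 1) = srl r l := by
  simp [sr]

def Srt (l : List ι) : Prop := l.Pairwise (fun a b => r a < r b)

lemma ins_lt (v : ι) {c : Ch ι} (hc : c ∈ Sp (fun l : List ι => ∀ b ∈ l, r v < r b)) :
    ins r v c = cn v c := by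
  refine Sp_eq _ _ (fun l hl => ?_) hc
  cases l with
  | nil => simp [insl]
  | cons a l => simp [insl, hl a (by simp)]

lemma ins_cn_gt (v a : ι) (h : r a < r v) (c : Ch ι) : ins r v (cn a c) = cn a (ins r v c) := by
  have : ins r v ∘ₗ cn a = cn a ∘ₗ ins r v := by
    apply ch_ext; intro l; simp [insl, h.not_gt, h.ne']
  exact LinearMap.congr_fun this c

lemma ins_cn_self (a : ι) (c : Ch ι) : ins r a (cn a c) = 0 := by
  have : ins r a ∘ₗ cn a = 0 := by
    apply ch_ext; intro l; simp [insl]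
  exact LinearMap.congr_fun this c

lemma bd_insl (hr : Function.Injective r) (v : ι) (l : List ι) (hl : Srt r l) :
    bd (insl r v l) = Finsupp.single l 1 + ins r v (bdl l) := by
  induction l with
  | nil => simp [insl, bdl]
  | cons a l ih =>
    have hl' := List.pairwise_cons.1 hl
    rcases lt_trichotomy (r v) (r a) with h | h | h
    · have h1 : ins r v (bdl (a :: l)) = cn v (bdl (a :: l)) := by
        apply ins_lt
        refine Sp_mono (fun t ht b hb => ?_) (bdl_mem (a :: l))
        rcases List.mem_cons.1 (ht.1.subset hb) with rfl | hb
        · exact h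
        · exact h.trans (hl'.1 b hb)
      rw [h1]
      simp only [insl, h, if_true, bd_single]
      rw [bdl]
    · obtain rfl := hr h
      simp only [insl, lt_irrefl, if_false, if_true, map_zero, bdl, map_add, ins_cn_self, add_zero]
      rw [ins_lt r v (single_mem_Sp hl'.1 1), cn_single, ch_add_self]
    · simp only [insl, h.not_gt, h.ne', if_false, bd_cn, ih hl'.2, bdl, map_add, cn_single,
        ins_single, ins_cn_gt r v a h]
      abel

lemma insl_mem (v : ι) (l : List ι) (hl : Srt r l) :
    insl r v l ∈ Sp (fun t => Srt r t ∧ t ⊆ v :: l) := by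
  induction l with
  | nil => exact single_mem_Sp ⟨by simp [Srt], by simp⟩ 1
  | cons a l ih =>
    have hl' := List.pairwise_cons.1 hl
    rcases lt_trichotomy (r v) (r a) with h | h | h
    · simp only [insl, h, if_true]
      refine single_mem_Sp ⟨List.pairwise_cons.2 ⟨?_, hl⟩, by simp⟩ 1
      intro b hb
      rcases List.mem_cons.1 hb with rfl | hb
      · exact h
      · exact h.trans (hl'.1 b hb)
    · simp [insl, h]
    · simp only [insl, h.not_gt, h.ne', if_false]
      refine Sp_induction _ (cn a) (fun t ht => ?_) (ih hl'.2)
      rw [cn_single]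
      refine single_mem_Sp ⟨List.pairwise_cons.2 ⟨?_, ht.1⟩, ?_⟩ 1
      · intro b hb
        rcases List.mem_cons.1 (ht.2 hb) with rfl | hb
        · exact h
        · exact hl'.1 b hb
      · intro b hb
        rcases List.mem_cons.1 hb with rfl | hb
        · simp
        · have := ht.2 hb
          simp at this ⊢
          tauto

lemma srl_mem (l : List ι) : srl r l ∈ Sp (fun t => Srt r t ∧ t ⊆ l) := by
  induction l with
  | nil => exact single_mem_Sp ⟨by simp [Srt], by simp⟩ 1
  | cons v l ih =>
    refine Sp_induction _ (ins r v) (fun t ht => ?_) ih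
    rw [ins_single]
    exact Sp_mono (fun u hu => ⟨hu.1, List.Subset.trans hu.2 (List.cons_subset_cons v ht.2)⟩) (insl_mem r v t ht.1)

lemma bd_ins (hr : Function.Injective r) (v : ι) {c : Ch ι} (hc : c ∈ Sp (Srt r)) :
    bd (ins r v c) = c + ins r v (bd c) := by
  refine Sp_eq (bd ∘ₗ ins r v) (LinearMap.id + ins r v ∘ₗ bd) (fun l hl => ?_) hc
  simpa using bd_insl r hr v l hl

lemma sr_cn (v : ι) (c : Ch ι) : sr r (cn v c) = ins r v (sr r c) := by
  have : sr r ∘ₗ cn v = ins r v ∘ₗ sr r := by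
    apply ch_ext; intro l; simp [srl]
  exact LinearMap.congr_fun this c

lemma bd_srl (hr : Function.Injective r) (l : List ι) : bd (srl r l) = sr r (bdl l) := by
  induction l with
  | nil => simp [srl, bdl]
  | cons v l ih =>
    simp only [srl, bdl, map_add, sr_single, sr_cn]
    rw [bd_ins r hr v (Sp_mono (fun t ht => ht.1) (srl_mem r l)), ih]

/-- homotopy, truncated -/
def Dn : ℕ → List ι → Ch ι
  | 0, _ => 0
  | _ + 1, [] => 0
  | n + 1, v :: l => cn v (Finsupp.single (v :: l) 1 + srl r (v :: l) + lx (Dn n) (bdl (v :: l)))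

lemma Dn_stable (n : ℕ) (l : List ι) (h : l.length ≤ n) : Dn r (n + 1) l = Dn r n l := by
  induction n generalizing l with
  | zero => 
    obtain rfl := List.length_eq_zero_iff.1 (Nat.le_zero.1 h)
    simp [Dn]
  | succ n ih =>
    cases l with
    | nil => simp [Dn]
    | cons v l =>
      have : lx (Dn r (n + 1)) (bdl (v :: l)) = lx (Dn r n) (bdl (v :: l)) := by
        refine Sp_eq _ _ (fun t ht => ?_) (bdl_mem (v :: l))
        simp only [lx_single, one_smul]
        apply ih
        have := ht.2
        omega
      rw [Dn, this, Dn]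

lemma Dn_stable' (n : ℕ) (l : List ι) (h : l.length ≤ n) : Dn r n l = Dn r l.length l := by
  induction n, h using Nat.le_induction with
  | base => rfl
  | succ n hn ih => rw [Dn_stable r n l hn, ih]

lemma Dn_mem (n : ℕ) (l : List ι) : Dn r n l ∈ Sp (fun t => t ⊆ l) := by
  induction n generalizing l with
  | zero => simp [Dn]
  | succ n ih =>
    cases l with
    | nil => simp [Dn]
    | cons v l =>
      rw [Dn]
      refine Sp_induction (P := fun t => t ⊆ v :: l) _ (cn v) (fun t ht => ?_) ?_
      · rw [cn_single]
        exact single_mem_Sp (P := fun t => t ⊆ v :: l) (List.cons_subset.2 ⟨List.mem_cons_self, ht⟩) 1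
      · refine Submodule.add_mem _ (Submodule.add_mem _ (single_mem_Sp (by simp) 1)
          (Sp_mono (fun t ht => ht.2) (srl_mem r _))) ?_
        refine Sp_induction _ (lx (Dn r n)) (fun t ht => ?_) (bdl_mem (v :: l))
        simp only [lx_single, one_smul]
        exact Sp_mono (fun u hu => List.Subset.trans hu ht.1.subset) (ih t)

lemma Dn_htpy (hr : Function.Injective r) (n : ℕ) (l : List ι) (h : l.length ≤ n) :
    bd (Dn r n l) + lx (Dn r n) (bdl l) = Finsupp.single l 1 + srl r l := by
  induction n generalizing l with
  | zero =>
    obtain rfl := List.length_eq_zero_iff.1 (Nat.le_zero.1 h)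
    simp [Dn, bdl, srl, ch_add_self]
  | succ n ih =>
    cases l with
    | nil => simp [Dn, bdl, srl, ch_add_self]
    | cons v l =>
      have h1 : lx (Dn r (n + 1)) (bdl (v :: l)) = lx (Dn r n) (bdl (v :: l)) := by
        refine Sp_eq _ _ (fun t ht => ?_) (bdl_mem (v :: l))
        simp only [lx_single, one_smul]
        apply Dn_stable
        have := ht.2
        omega
      have h2 : bd (lx (Dn r n) (bdl (v :: l))) + lx (Dn r n) (bd (bdl (v :: l)))
          = bdl (v :: l) + sr r (bdl (v :: l)) := by
        refine Sp_eq (bd ∘ₗ lx (Dn r n) + lx (Dn r n) ∘ₗ bd) (LinearMap.id + sr r)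
          (fun t ht => ?_) (bdl_mem (v :: l))
        simp only [LinearMap.add_apply, LinearMap.comp_apply, lx_single, one_smul, bd_single,
          sr_single, LinearMap.id_apply]
        apply ih
        have := ht.2
        simp at this h
        omega
      rw [bd_bdl, map_zero, add_zero] at h2
      rw [h1, Dn, bd_cn, map_add bd, map_add bd, h2, bd_single, bd_srl r hr]
      have h3 : bdl (v :: l) + sr r (bdl (v :: l)) + (bdl (v :: l) + sr r (bdl (v :: l))) = 0 :=
        ch_add_self _
      rw [h3, map_zero, add_zero, add_assoc, ch_add_self, add_zero]

lemma sort_lemma (hr : Function.Injective r) (K : List ι → Prop)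
    (hK : ∀ l l', l' ⊆ l → K l → K l') (x : List ι → ZMod 2)
    (hx : ∀ l, K l → dd x l = 0) (hs : ∀ l, K l → Srt r l → x l = 0) :
    ∃ τ : List ι → ZMod 2, τ [] = 0 ∧ ∀ l, K l → x l = dd τ l := by
  refine ⟨fun t => lx x (Dn r t.length t), by simp [Dn], fun l hl => ?_⟩
  have h1 := congrArg (lx x) (Dn_htpy r hr l.length l le_rfl)
  simp only [map_add, ← lx_dd, lx_single, one_smul] at h1
  have h2 : lx (dd x) (Dn r l.length l) = 0 := by
    have := Sp_eq (lx (dd x)) 0 (fun t ht => ?_) (Dn_mem r l.length l)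
    · simpa using this
    · simp [hx t (hK l t ht hl)]
  have h3 : lx x (srl r l) = 0 := by
    have := Sp_eq (lx x) 0 (fun t ht => ?_) (srl_mem r l)
    · simpa using this
    · simp [hs t (hK l t ht.2 hl) ht.1]
  rw [h2, h3, zero_add, add_zero] at h1
  rw [← h1, dd_eq]
  have := Sp_eq (lx x ∘ₗ lx (Dn r l.length)) (lx (fun t => lx x (Dn r t.length t))) (fun t ht => ?_)
    (bdl_mem l)
  · simpa using this
  · have := ht.2
    simp only [LinearMap.comp_apply, lx_single, one_smul]
    rw [Dn_stable' r l.length t (by omega)]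

end
end CT


namespace CT
noncomputable section

variable {α : Type*}

def cup2 (p : α → α → α → ZMod 2) (y : List α → ZMod 2) : List α → ZMod 2
  | a :: b :: c :: l => p a b c * y (c :: l)
  | _ => 0

def cup1 (p : α → α → ZMod 2) (y : List α → ZMod 2) : List α → ZMod 2
  | a :: b :: l => p a b * y (b :: l)
  | _ => 0

def cup0 (p : α → ZMod 2) (y : List α → ZMod 2) : List α → ZMod 2
  | a :: l => p a * y (a :: l)
  | _ => 0

lemma dd_cup0 (p : α → ZMod 2) (y : List α → ZMod 2) (l : List α)
    (h : dd y l = 0) :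
    dd (cup0 p y) l = cup1 (fun a b => p a + p b) y l := by
  rcases l with _ | ⟨a, _ | ⟨b, l⟩⟩
  · simp [dd, cup1]
  · simp [dd, cup1, cup0]
  · simp only [dd, cup0, dd_mul, cup1] at h ⊢
    have h' : dd (fun t => y (a :: b :: t)) l = y (b :: l) + y (a :: l) := by
      linear_combination (exp := 1) h - z2_add_self (y (b :: l)) - z2_add_self (y (a :: l))
    rw [h']
    linear_combination z2_add_self (p a * y (a :: l))

lemma dd_cup1 (p : α → α → ZMod 2) (y : List α → ZMod 2) (l : List α)
    (h : dd y l.tail = 0) :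
    dd (cup1 p y) l = cup2 (fun a b c => p b c + p a c + p a b) y l := by
  rcases l with _ | ⟨a, _ | ⟨b, _ | ⟨c, l⟩⟩⟩
  · simp [dd, cup2]
  · simp [dd, cup1, cup2]
  · simp [dd, cup1, cup2]
  · simp only [dd, cup1, dd_mul, cup2, List.tail] at h ⊢
    have h' : dd (fun t => y (b :: c :: t)) l = y (c :: l) + y (b :: l) := by
      linear_combination (exp := 1) h - z2_add_self (y (b :: l)) - z2_add_self (y (c :: l))
    rw [h']
    linear_combination z2_add_self (p a b * y (b :: l))

lemma dd_cup2 (p : α → α → α → ZMod 2) (y : List α → ZMod 2) (hy : y [] = 0) (l : List α)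
    (h : ∀ a b c d t, l = a :: b :: c :: d :: t → p b c d + p a c d + p a b d + p a b c = 0) :
    dd (cup2 p y) l = cup2 p (dd y) l := by
  rcases l with _ | ⟨a, _ | ⟨b, _ | ⟨c, _ | ⟨d, l⟩⟩⟩⟩
  · simp [dd, cup2]
  · simp [dd, cup2]
  · simp [dd, cup2]
  · simp [dd, cup2, hy]
  · have h := h a b c d l rfl
    simp only [dd, cup2, dd_mul] at h ⊢
    linear_combination y (d :: l) * h - z2_add_self (p a b c * y (d :: l))

def pw (n : α → α → α → ZMod 2) : ℕ → List α → ZMod 2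
  | 0 => fun l => if l.length = 1 then 1 else 0
  | m + 1 => cup2 n (pw n m)

lemma pw_len (n : α → α → α → ZMod 2) (m : ℕ) (l : List α) (h : l.length ≠ 2 * m + 1) :
    pw n m l = 0 := by
  induction m generalizing l with
  | zero => simpa [pw] using h
  | succ m ih =>
    rcases l with _ | ⟨a, _ | ⟨b, _ | ⟨c, l⟩⟩⟩
    · simp [pw, cup2]
    · simp [pw, cup2]
    · simp [pw, cup2]
    · simp only [pw, cup2]
      rw [ih, mul_zero]
      simp at h ⊢
      omega

lemma pw_nil (n : α → α → α → ZMod 2) (m : ℕ) : pw n m [] = 0 := pw_len n m [] (by simp)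

def Down (K : List α → Prop) : Prop := ∀ l l', l' ⊆ l → K l → K l'

def Coc (K : List α → Prop) (n : α → α → α → ZMod 2) : Prop :=
  ∀ a b c d, K [a, b, c, d] → n b c d + n a c d + n a b d + n a b c = 0

lemma dd_cup2_K {K : List α → Prop} (hK : Down K) {n : α → α → α → ZMod 2} (hn : Coc K n)
    (y : List α → ZMod 2) (hy : y [] = 0) (l : List α) (hl : K l) :
    dd (cup2 n y) l = cup2 n (dd y) l := by
  apply dd_cup2 _ _ hy
  rintro a b c d t rfl
  exact hn a b c d (hK _ _ (by intro e he; simp at he ⊢; tauto) hl)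

lemma dd_cup2_zero {K : List α → Prop} (hK : Down K) {n : α → α → α → ZMod 2} (hn : Coc K n)
    (y : List α → ZMod 2) (hy : y [] = 0) (hy' : ∀ l, K l → dd y l = 0) (l : List α) (hl : K l) :
    dd (cup2 n y) l = 0 := by
  rw [dd_cup2_K hK hn y hy l hl]
  rcases l with _ | ⟨a, _ | ⟨b, _ | ⟨c, l⟩⟩⟩
  · simp [cup2]
  · simp [cup2]
  · simp [cup2]
  · simp only [cup2]
    rw [hy' _ (hK _ _ (by intro e he; simp at he ⊢; tauto) hl), mul_zero]

lemma dd_pw {K : List α → Prop} (hK : Down K) {n : α → α → α → ZMod 2} (hn : Coc K n) (m : ℕ)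
    (l : List α) (hl : K l) : dd (pw n m) l = 0 := by
  induction m generalizing l with
  | zero =>
    rcases l with _ | ⟨a, _ | ⟨b, _ | ⟨c, l⟩⟩⟩
    · simp [dd]
    · simp [dd, pw]
    · simpa [dd, pw] using z2_add_self 1
    · simp [dd, pw, dd_zero]
  | succ m ih => exact dd_cup2_zero hK hn _ (pw_nil n m) ih l hl

lemma cup2_add_left (p q : α → α → α → ZMod 2) (y : List α → ZMod 2) (l : List α) :
    cup2 (fun a b c => p a b c + q a b c) y l = cup2 p y l + cup2 q y l := by
  rcases l with _ | ⟨a, _ | ⟨b, _ | ⟨c, l⟩⟩⟩ <;> simp [cup2, add_mul]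

lemma cup2_add_right (p : α → α → α → ZMod 2) (y z : List α → ZMod 2) (l : List α) :
    cup2 p (fun t => y t + z t) l = cup2 p y l + cup2 p z l := by
  rcases l with _ | ⟨a, _ | ⟨b, _ | ⟨c, l⟩⟩⟩ <;> simp [cup2, mul_add]

theorem comb {ι : Type*} [Fintype ι] (n : ι → ι → ι → ZMod 2) (m : ℕ) (K : List ι → Prop)
    (hK : Down K) (hn : Coc K n) (V : Finset ι) (hV : ∀ l, K l → ∀ a ∈ l, a ∈ V)
    (hc : V.card < (m + 1) ^ 2) :
    ∃ τ : List ι → ZMod 2, τ [] = 0 ∧ ∀ l, K l → pw n m l = dd τ l := by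
  classical
  induction m generalizing K V with
  | zero =>
    refine ⟨fun _ => 0, rfl, fun l hl => ?_⟩
    have hV0 : V = ∅ := by simpa using hc
    cases l with
    | nil => simp [pw, dd]
    | cons a l => have := hV _ hl a (by simp); simp [hV0] at this
  | succ m ih =>
    let e := Fintype.equivFin ι
    by_cases hσ : ∃ σ : Finset ι, σ.card = 2 * m + 3 ∧ K σ.toList
    · obtain ⟨σ, hσc, hσK⟩ := hσ
      have hσV : σ ⊆ V := fun a ha => hV _ hσK a (by simpa using ha)
      let L : List ι → Prop := fun l => K l ∧ ∀ a ∈ l, a ∉ σ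
      have hL : Down L := fun l l' hl h => ⟨hK l l' hl h.1, fun a ha => h.2 a (hl ha)⟩
      obtain ⟨τ, hτ0, hτ⟩ := ih L hL (fun a b c d h => hn a b c d h.1) (V \ σ)
        (fun l hl a ha => Finset.mem_sdiff.2 ⟨hV l hl.1 a ha, hl.2 a ha⟩) (by
          rw [Finset.card_sdiff_of_subset hσV, hσc]
          have : (m + 1 + 1) ^ 2 = (m + 1) ^ 2 + (2 * m + 3) := by ring
          have : 0 < (m + 1) ^ 2 := by positivity
          omega)
      let τ' : List ι → ZMod 2 := fun l => if ∀ a ∈ l, a ∉ σ then τ l else 0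
      have hτ'0 : τ' [] = 0 := by simp [τ', hτ0]
      have hτ' : ∀ l, L l → pw n m l + dd τ' l = 0 := by
        intro l hl
        rw [hτ l hl, dd_congr (x := τ') (y := τ)]
        · exact z2_add_self _
        · intro t ht
          simp only [τ']
          rw [if_pos]
          exact fun a ha => hl.2 a (ht.subset ha)
      obtain ⟨v, hv⟩ : σ.Nonempty := Finset.card_pos.1 (by omega)
      let β : ι → ι → ZMod 2 := fun a b => if a ∈ σ ∧ b ∈ σ then n v a b else 0
      let dβ : ι → ι → ι → ZMod 2 := fun a b c => β b c + β a c + β a b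
      let n' : ι → ι → ι → ZMod 2 := fun a b c => n a b c + dβ a b c
      have hn'σ : ∀ a b c, a ∈ σ → b ∈ σ → c ∈ σ → n' a b c = 0 := by
        intro a b c ha hb hc
        simp only [n', dβ, β, ha, hb, hc, and_self, if_true]
        have := hn v a b c (hK _ _ (by
          intro e he
          simp at he ⊢
          rcases he with rfl | rfl | rfl | rfl <;> assumption) hσK)
        linear_combination this
      have hn' : Coc K n' := by
        intro a b c d h
        have := hn a b c d h
        simp only [n', dβ]
        linear_combination this + z2_add_self (β c d) + z2_add_self (β b d) + z2_add_self (β b c)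
          + z2_add_self (β a d) + z2_add_self (β a c) + z2_add_self (β a b)
      have hy0 := pw_nil n m
      have hyd := dd_pw hK hn m
      let y' : List ι → ZMod 2 := fun t => pw n m t + dd τ' t
      have hy'0 : y' [] = 0 := by simp [y', hy0, dd]
      have hy'd : ∀ l, K l → dd y' l = 0 := by
        intro l hl
        simp only [y']
        rw [dd_add, hyd l hl, dd_dd, add_zero]
      let r : ι → ℕ := fun a => if a ∈ σ then (e a : ℕ) else Fintype.card ι + e a
      have hr : Function.Injective r := by
        intro a b hab
        apply e.injective
        apply Fin.ext
        have h1 := (e a).2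
        have h2 := (e b).2
        simp only [r] at hab
        split_ifs at hab <;> omega
      have hr1 : ∀ a c, r a < r c → c ∈ σ → a ∈ σ := by
        intro a c h hc
        by_contra ha
        have h2 := (e c).2
        simp only [r, ha, hc, if_true, if_false] at h
        omega
      obtain ⟨ρ, hρ0, hρ⟩ := sort_lemma r hr K hK (cup2 n' y')
        (fun l hl => dd_cup2_zero hK hn' y' hy'0 hy'd l hl) (by
          intro l hl hs
          rcases l with _ | ⟨a, _ | ⟨b, _ | ⟨c, l⟩⟩⟩
          · simp [cup2]
          · simp [cup2]
          · simp [cup2]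
          · simp only [cup2]
            simp only [Srt, List.pairwise_cons] at hs
            by_cases hcσ : c ∈ σ
            · rw [hn'σ a b c (hr1 a c (hs.1 c (by simp)) hcσ) (hr1 b c (hs.2.1 c (by simp)) hcσ) hcσ,
                zero_mul]
            · have : L (c :: l) := by
                refine ⟨hK _ _ (by intro e he; simp at he ⊢; tauto) hl, ?_⟩
                intro a ha
                rcases List.mem_cons.1 ha with rfl | ha
                · exact hcσ
                · exact fun h => hcσ (hr1 c a (hs.2.2.1 a ha) h)
              simp only [y']
              rw [hτ' _ this, mul_zero])
      refine ⟨fun t => ρ t + (cup2 n' τ' t + cup1 β (pw n m) t), by simp [hρ0, cup2, cup1], ?_⟩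
      intro l hl
      rw [dd_add, dd_add, ← hρ l hl, dd_cup2_K hK hn' τ' hτ'0 l hl,
        dd_cup1 β _ l (hyd _ (hK _ _ (List.tail_subset l) hl))]
      have k1 : cup2 n' y' l = cup2 n' (pw n m) l + cup2 n' (dd τ') l := cup2_add_right _ _ _ _
      have k2 : cup2 n' (pw n m) l = cup2 n (pw n m) l + cup2 dβ (pw n m) l := cup2_add_left _ _ _ _
      change cup2 n (pw n m) l = cup2 n' y' l + (cup2 n' (dd τ') l + cup2 dβ (pw n m) l)
      rw [k1, k2]
      linear_combination - z2_add_self (cup2 dβ (pw n m) l) - z2_add_self (cup2 n' (dd τ') l)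
    · push Not at hσ
      refine sort_lemma (fun a => (e a : ℕ)) (Fin.val_injective.comp e.injective) K hK _
        (dd_pw hK hn (m + 1)) (fun l hl hs => ?_)
      apply pw_len
      intro hlen
      have hnd : l.Nodup := by
        refine List.Pairwise.imp (fun {a b} h => ?_) hs
        rintro rfl
        exact lt_irrefl _ h
      refine hσ l.toFinset ?_ (hK _ _ ?_ hl)
      · rw [List.toFinset_card_of_nodup hnd, hlen]; ring
      · intro a ha; simpa using ha

end
end CT


namespace CT
noncomputable section

lemma prl_mem {α β : Type*} (f g : α → β) (l : List α) :
    prl f g l ∈ Sp (fun t => ∀ a ∈ t, ∃ b ∈ l, a = f b ∨ a = g b) := by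
  induction l with
  | nil => simp [prl]
  | cons v l ih =>
    refine Submodule.add_mem _ (single_mem_Sp ?_ 1) ?_
    · intro a ha
      simp only [List.mem_cons, List.mem_map] at ha
      rcases ha with rfl | rfl | ⟨b, hb, rfl⟩
      · exact ⟨v, by simp, Or.inl rfl⟩
      · exact ⟨v, by simp, Or.inr rfl⟩
      · exact ⟨b, by simp [hb], Or.inr rfl⟩
    · refine Sp_induction _ (cn (f v)) (fun t ht => ?_) ih
      rw [cn_single]
      refine single_mem_Sp ?_ 1
      intro a ha
      rcases List.mem_cons.1 ha with rfl | ha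
      · exact ⟨v, by simp, Or.inl rfl⟩
      · obtain ⟨b, hb, h⟩ := ht a ha
        exact ⟨b, by simp [hb], h⟩

def inS {N : ℕ} (j : ℕ) (a : Fin N → ℝ) : Prop := ∑ i, |a i| = 1 ∧ ∀ i : Fin N, j < i → a i = 0

def goodL {N : ℕ} (j : ℕ) (ε : ℝ) (l : List (Fin N → ℝ)) : Prop :=
  (∀ a ∈ l, inS j a) ∧ ∀ a ∈ l, ∀ b ∈ l, dist a b < ε

lemma goodL_neg {N : ℕ} {j : ℕ} {ε : ℝ} {l : List (Fin N → ℝ)} (h : goodL j ε l) :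
    goodL j ε (l.map (fun x => -x)) := by
  constructor
  · intro a ha
    obtain ⟨b, hb, rfl⟩ := List.mem_map.1 ha
    have := h.1 b hb
    exact ⟨by simpa using this.1, fun i hi => by simp [this.2 i hi]⟩
  · intro a ha a' ha'
    obtain ⟨b, hb, rfl⟩ := List.mem_map.1 ha
    obtain ⟨b', hb', rfl⟩ := List.mem_map.1 ha'
    simpa using h.2 b hb b' hb'

lemma mp_mp_neg {N : ℕ} (c : Ch (Fin N → ℝ)) :
    mp (fun x => -x) (mp (fun x : Fin N → ℝ => -x) c) = c := by
  have : mp (fun x => -x) ∘ₗ mp (fun x : Fin N → ℝ => -x) = LinearMap.id := by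
    apply ch_ext; intro l; simp [Function.comp_def]
  exact LinearMap.congr_fun this c

def FF {N : ℕ} (e : Fin N → ℝ) (s : ℝ) (x : Fin N → ℝ) : Fin N → ℝ := (1 - s) • x + s • e

lemma FF_inS {N : ℕ} (k : ℕ) (hk : k + 1 < N) (s : ℝ) (h0 : 0 ≤ s) (h1 : s ≤ 1) (x : Fin N → ℝ)
    (hx : inS k x) : inS (k + 1) (FF (Pi.single ⟨k + 1, hk⟩ 1) s x) := by
  constructor
  · have : ∀ i, |FF (Pi.single ⟨k + 1, hk⟩ 1) s x i| =
        (1 - s) * |x i| + s * (Pi.single (⟨k + 1, hk⟩ : Fin N) (1 : ℝ) : Fin N → ℝ) i := by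
      intro i
      by_cases hi : i = ⟨k + 1, hk⟩
      · subst hi
        have : x ⟨k + 1, hk⟩ = 0 := hx.2 _ (by simp)
        simp [FF, this, abs_of_nonneg h0]
      · simp [FF, hi, abs_mul, abs_of_nonneg (sub_nonneg.2 h1)]
    simp only [this, Finset.sum_add_distrib, ← Finset.mul_sum, hx.1]
    simp
  · intro i hi
    have : i ≠ ⟨k + 1, hk⟩ := by rintro rfl; simp at hi
    simp [FF, this, hx.2 i (by omega)]

lemma inS_norm {N : ℕ} {k : ℕ} {x : Fin N → ℝ} (hx : inS k x) : ‖x‖ ≤ 1 := by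
  rw [pi_norm_le_iff_of_nonneg zero_le_one]
  intro i
  rw [Real.norm_eq_abs, ← hx.1]
  exact Finset.single_le_sum (f := fun i => |x i|) (fun _ _ => abs_nonneg _) (Finset.mem_univ i)

lemma FF_dist {N : ℕ} {k k' : ℕ} {e x y : Fin N → ℝ} (he : inS k' e) (hy : inS k y) (s s' : ℝ)
    (h0 : 0 ≤ s) (h1 : s ≤ 1) : dist (FF e s x) (FF e s' y) ≤ dist x y + |s - s'| * 2 := by
  have h : FF e s x - FF e s' y = (1 - s) • (x - y) + (s - s') • (e - y) := by
    simp only [FF]; module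
  rw [dist_eq_norm, dist_eq_norm, h]
  refine (norm_add_le _ _).trans (add_le_add ?_ ?_)
  · rw [norm_smul, Real.norm_eq_abs, abs_of_nonneg (sub_nonneg.2 h1)]
    exact mul_le_of_le_one_left (norm_nonneg _) (by linarith)
  · rw [norm_smul, Real.norm_eq_abs]
    refine mul_le_mul_of_nonneg_left ?_ (abs_nonneg _)
    exact (norm_sub_le _ _).trans (by linarith [inS_norm he, inS_norm hy])

lemma tele {M : Type*} [AddCommGroup M] (h : ∀ x : M, x + x = 0) (u : ℕ → M) (n : ℕ) :
    ∑ j ∈ Finset.range n, (u j + u (j + 1)) = u 0 + u n := by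
  induction n with
  | zero => simp [h]
  | succ n ih =>
    rw [Finset.sum_range_succ, ih]
    have : u 0 + u n + (u n + u (n + 1)) = u 0 + u (n + 1) + (u n + u n) := by abel
    rw [this, h, add_zero]

theorem chains (N : ℕ) (k : ℕ) (hk : k < N) (ε : ℝ) (hε : 0 < ε) :
    ∃ h : ℕ → Ch (Fin N → ℝ), (∃ p, h 0 = Finsupp.single [p] 1) ∧
      (∀ j < k, bd (h (j + 1)) = h j + mp (fun x => -x) (h j)) ∧
      ∀ j ≤ k, h j ∈ Sp (goodL j ε) := by
  induction k generalizing ε with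
  | zero =>
    refine ⟨fun _ => Finsupp.single [Pi.single ⟨0, hk⟩ 1] 1, ⟨_, rfl⟩, by simp, ?_⟩
    intro j hj
    obtain rfl : j = 0 := by omega
    refine single_mem_Sp ⟨?_, ?_⟩ 1
    · intro a ha
      obtain rfl := List.mem_singleton.1 ha
      constructor
      · have : ∀ i, |(Pi.single (⟨0, hk⟩ : Fin N) (1 : ℝ) : Fin N → ℝ) i| =
          (Pi.single (⟨0, hk⟩ : Fin N) (1 : ℝ) : Fin N → ℝ) i := by
          intro i
          by_cases hi : i = ⟨0, hk⟩
          · subst hi; simp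
          · simp [hi]
        simp [this]
      · intro i hi
        have : i ≠ ⟨0, hk⟩ := by rintro rfl; simp at hi
        simp [this]
    · intro a ha b hb
      obtain rfl := List.mem_singleton.1 ha
      obtain rfl := List.mem_singleton.1 hb
      simpa using hε
  | succ k ih =>
    obtain ⟨h, hp, hb, hs⟩ := ih (by omega) (ε / 2) (by positivity)
    let z := h k + mp (fun x => -x) (h k)
    have hz : z ∈ Sp (goodL k (ε / 2)) := by
      refine Submodule.add_mem _ (hs k le_rfl) ?_
      refine Sp_induction _ (mp _) (fun l hl => ?_) (hs k le_rfl)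
      rw [mp_single]
      exact single_mem_Sp (goodL_neg hl) 1
    have hbz : bd z = 0 := by
      simp only [z, map_add, bd_mp]
      cases k with
      | zero =>
        obtain ⟨p, hp⟩ := hp
        simp [hp, bdl, ch_add_self]
      | succ k =>
        rw [hb k (by omega), map_add, mp_mp_neg, add_comm (mp _ (h k)), ch_add_self]
    let e : Fin N → ℝ := Pi.single ⟨k + 1, hk⟩ 1
    have he : inS (k + 1) e := by
      constructor
      · have : ∀ i, |(Pi.single (⟨k + 1, hk⟩ : Fin N) (1 : ℝ) : Fin N → ℝ) i| =
          (Pi.single (⟨k + 1, hk⟩ : Fin N) (1 : ℝ) : Fin N → ℝ) i := by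
          intro i
          by_cases hi : i = ⟨k + 1, hk⟩
          · subst hi; simp
          · simp [hi]
        simp [e, this]
      · intro i hi
        have : i ≠ ⟨k + 1, hk⟩ := by rintro rfl; simp at hi
        simp [e, this]
    obtain ⟨M, hM⟩ := exists_nat_gt (4 / ε)
    have hM0 : (0 : ℝ) < M := lt_trans (by positivity) hM
    have hM2 : (1 / M : ℝ) * 2 < ε / 2 := by
      rw [div_lt_iff₀ hε] at hM
      rw [div_mul_eq_mul_div, div_lt_iff₀ hM0]
      linarith
    let f : ℕ → (Fin N → ℝ) → (Fin N → ℝ) := fun j => FF e (j / M)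
    let c := ∑ j ∈ Finset.range M, pr (f j) (f (j + 1)) z
    have hbc : bd c = z := by
      have h1 : ∀ j, bd (pr (f j) (f (j + 1)) z) = mp (f j) z + mp (f (j + 1)) z := by
        intro j
        have := bd_pr (f j) (f (j + 1)) z
        rwa [hbz, map_zero, add_zero] at this
      simp only [c, map_sum, h1]
      rw [tele ch_add_self (fun j => mp (f j) z) M]
      have h2 : mp (f 0) z = z := by
        have : f 0 = id := by
          funext x; simp [f, FF]
        rw [this]
        have : mp (id : (Fin N → ℝ) → _) = LinearMap.id := by
          apply ch_ext; intro l; simp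
        rw [this]; rfl
      have h3 : mp (f M) z = 0 := by
        have hf : f M = fun _ => e := by
          funext x; simp [f, FF, div_self hM0.ne']
        rw [hf]
        have : mp (fun _ => e) (mp (fun x : Fin N → ℝ => -x) (h k)) = mp (fun _ => e) (h k) := by
          have : mp (fun _ => e) ∘ₗ mp (fun x : Fin N → ℝ => -x) = mp (fun _ => e) := by
            apply ch_ext; intro l; simp [Function.comp_def]
          exact LinearMap.congr_fun this _
        simp only [z, map_add, this, ch_add_self]
      rw [h2, h3, add_zero]
    have hcs : c ∈ Sp (goodL (k + 1) ε) := by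
      refine Submodule.sum_mem _ (fun j hj => ?_)
      have hj := Finset.mem_range.1 hj
      have hj' : (j : ℝ) + 1 ≤ M := by exact_mod_cast hj
      refine Sp_induction _ (pr _ _) (fun l hl => ?_) hz
      rw [pr_single]
      have hcl : ∀ a, (∃ b ∈ l, a = f j b ∨ a = f (j + 1) b) →
          ∃ b ∈ l, ∃ s : ℝ, j / M ≤ s ∧ s ≤ (j + 1) / M ∧ a = FF e s b := by
        rintro a ⟨b, hb, h | h⟩
        · exact ⟨b, hb, j / M, le_rfl, by gcongr; linarith, h⟩
        · exact ⟨b, hb, (j + 1) / M, by gcongr; linarith, le_rfl, by simpa [f] using h⟩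
      have hb0 : (0 : ℝ) ≤ j / M := by positivity
      have hb1 : ((j : ℝ) + 1) / M ≤ 1 := by rw [div_le_one hM0]; exact hj'
      have hb2 : ((j : ℝ) + 1) / M - j / M = 1 / M := by ring
      refine Sp_mono (fun t ht => ⟨?_, ?_⟩) (prl_mem (f j) (f (j + 1)) l)
      · intro a ha
        obtain ⟨b, hb, s, h1, h2, rfl⟩ := hcl a (ht a ha)
        exact FF_inS k hk s (hb0.trans h1) (h2.trans hb1) b (hl.1 b hb)
      · intro a ha a' ha'
        obtain ⟨b, hb, s, h1, h2, rfl⟩ := hcl a (ht a ha)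
        obtain ⟨b', hb', s', h1', h2', rfl⟩ := hcl a' (ht a' ha')
        have := FF_dist (x := b) he (hl.1 b' hb') s s' (hb0.trans h1) (h2.trans hb1)
        have hd := hl.2 b hb b' hb'
        have : |s - s'| ≤ 1 / M := by rw [abs_le]; constructor <;> linarith
        linarith
    refine ⟨fun j => if j ≤ k then h j else c, ?_, ?_, ?_⟩
    · simpa using hp
    · intro j hj
      by_cases hjk : j < k
      · simp only [show j + 1 ≤ k by omega, show j ≤ k by omega, if_true]
        exact hb j hjk
      · obtain rfl : j = k := by omega
        simp only [show ¬ (j + 1 ≤ j) by omega, le_refl, if_true, if_false]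
        exact hbc
    · intro j hj
      by_cases hjk : j ≤ k
      · simp only [hjk, if_true]
        exact Sp_mono (fun l hl => ⟨hl.1, fun a ha b hb => (hl.2 a ha b hb).trans (by linarith)⟩)
          (hs j hjk)
      · obtain rfl : j = k + 1 := by omega
        simpa using hcs

end
end CT


namespace CT
noncomputable section

lemma dd_map {α β : Type*} (f : α → β) (y : List β → ZMod 2) (l : List α) :
    dd (fun t => y (t.map f)) l = dd y (l.map f) := by
  induction l generalizing y with
  | nil => simp [dd]
  | cons v l ih =>
    simp only [dd, List.map_cons]
    rw [ih (fun t => y (f v :: t))]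

lemma lx_mp {α β : Type*} (f : α → β) (y : List β → ZMod 2) (c : Ch α) :
    lx y (mp f c) = lx (fun t => y (t.map f)) c := by
  have : lx y ∘ₗ mp f = lx (fun t => y (t.map f)) := by
    apply ch_ext; intro l; simp
  exact LinearMap.congr_fun this c

lemma lx_plus {α : Type*} (x y : List α → ZMod 2) (c : Ch α) :
    lx x c + lx y c = lx (fun t => x t + y t) c := by
  have : lx x + lx y = lx (fun t => x t + y t) := by
    apply ch_ext; intro l; simp
  exact LinearMap.congr_fun this c

lemma lx_congr {α : Type*} {P : List α → Prop} {x y : List α → ZMod 2} {c : Ch α}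
    (hc : c ∈ Sp P) (h : ∀ l, P l → x l = y l) : lx x c = lx y c :=
  Sp_eq _ _ (fun l hl => by simp [h l hl]) hc

def onS {N : ℕ} (x : Fin N → ℝ) : Prop := ∑ i, |x i| = 1

def SL {N : ℕ} (r : ℝ) (l : List (Fin N → ℝ)) : Prop :=
  (∀ a ∈ l, onS a) ∧ ∀ a ∈ l, ∀ b ∈ l, dist a b < r

lemma SL_sub {N : ℕ} {r : ℝ} {l l' : List (Fin N → ℝ)} (h : l' ⊆ l) (hl : SL r l) : SL r l' :=
  ⟨fun a ha => hl.1 a (h ha), fun a ha b hb => hl.2 a (h ha) b (h hb)⟩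

theorem descend {N : ℕ} (m : ℕ) (hm : 1 ≤ m) (hN : 2 * m < N) {ι : Type*} [Fintype ι]
    (K : List ι → Prop) (hK : Down K) (n : ι → ι → ι → ZMod 2) (hn : Coc K n)
    (hc : Fintype.card ι < (m + 1) ^ 2) (i : (Fin N → ℝ) → ι)
    (b : (Fin N → ℝ) → (Fin N → ℝ) → ZMod 2) (e : (Fin N → ℝ) → ZMod 2) (r : ℝ) (hr : 0 < r)
    (hi : ∀ x, onS x → i (-x) = i x)
    (hKi : ∀ l, SL r l → K (l.map i))
    (hb : ∀ x y z, SL r [x, y, z] → n (i x) (i y) (i z) = b y z + b x z + b x y)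
    (hbe : ∀ x y, SL r [x, y] → b x y + b (-x) (-y) = e x + e y)
    (he : ∀ x, onS x → e x + e (-x) = 1) : False := by
  obtain ⟨h, ⟨p, h0⟩, hbd, hg⟩ := chains N (2 * m) hN r hr
  have hs : ∀ j ≤ 2 * m, h j ∈ Sp (SL (N := N) r) := fun j hj =>
    Sp_mono (fun l hl => ⟨fun a ha => (hl.1 a ha).1, hl.2⟩) (hg j hj)
  have himap : ∀ l, SL r l → (l.map (fun x => -x)).map i = l.map i := by
    intro l hl
    rw [List.map_map]
    exact List.map_congr_left (fun a ha => hi a (hl.1 a ha))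
  let y : ℕ → List (Fin N → ℝ) → ZMod 2 := fun k l => pw n k (l.map i)
  have hy0 : ∀ k, y k [] = 0 := fun k => pw_nil n k
  have hdy : ∀ k l, SL r l → dd (y k) l = 0 := by
    intro k l hl
    rw [show y k = fun l => pw n k (l.map i) from rfl, dd_map]
    exact dd_pw hK hn k _ (hKi l hl)
  have hyn : ∀ k l, SL r l → y k (l.map (fun x => -x)) = y k l := by
    intro k l hl
    simp only [y]; rw [himap l hl]
  have key : ∀ k, k ≤ m → lx (y k) (h (2 * k)) = 1 := by
    intro k
    induction k with
    | zero =>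
      intro _
      simp [h0, y, pw]
    | succ k ih =>
      intro hk
      rw [← ih (by omega)]
      have e1 : lx (y (k + 1)) (h (2 * (k + 1))) = lx (dd (cup1 b (y k))) (h (2 * (k + 1))) := by
        refine lx_congr (hs _ (by omega)) (fun l hl => ?_)
        rw [dd_cup1 _ _ _ (hdy k _ (SL_sub (List.tail_subset l) hl))]
        rcases l with _ | ⟨x, _ | ⟨x', _ | ⟨x'', l⟩⟩⟩
        · simp [y, pw, cup2]
        · simp [y, pw, cup2]
        · simp [y, pw, cup2]
        · simp only [y, List.map_cons, pw, cup2]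
          rw [hb x x' x'' (SL_sub (by intro a ha; simp at ha ⊢; tauto) hl)]
      have e2 : lx (fun l => cup1 b (y k) l + cup1 b (y k) (l.map (fun x => -x))) (h (2 * k + 1)) =
          lx (dd (cup0 e (y k))) (h (2 * k + 1)) := by
        refine lx_congr (hs _ (by omega)) (fun l hl => ?_)
        rw [dd_cup0 _ _ _ (hdy k l hl)]
        rcases l with _ | ⟨x, _ | ⟨x', l⟩⟩
        · simp [cup1]
        · simp [cup1]
        · have := hyn k (x' :: l) (SL_sub (by simp) hl)
          simp only [List.map_cons] at this
          simp only [List.map_cons, cup1]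
          rw [this, ← add_mul, hbe x x' (SL_sub (by intro a ha; simp at ha ⊢; tauto) hl)]
      have e3 : lx (fun l => cup0 e (y k) l + cup0 e (y k) (l.map (fun x => -x))) (h (2 * k)) =
          lx (y k) (h (2 * k)) := by
        refine lx_congr (hs _ (by omega)) (fun l hl => ?_)
        rcases l with _ | ⟨x, l⟩
        · simp [cup0, hy0]
        · have := hyn k (x :: l) hl
          simp only [List.map_cons] at this
          simp only [List.map_cons, cup0]
          rw [this, ← add_mul, he x (hl.1 x (by simp)), one_mul]
      rw [e1, lx_dd, show 2 * (k + 1) = (2 * k + 1) + 1 by ring, hbd _ (by omega), map_add, lx_mp,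
        lx_plus, e2, lx_dd, hbd _ (by omega), map_add, lx_mp, lx_plus, e3]
  obtain ⟨τ, -, hτ⟩ := comb n m K hK hn Finset.univ (fun _ _ _ _ => Finset.mem_univ _)
    (by simpa using hc)
  have f1 : lx (y m) (h (2 * m)) = lx (dd (fun l => τ (l.map i))) (h (2 * m)) := by
    refine lx_congr (hs _ le_rfl) (fun l hl => ?_)
    rw [dd_map]
    exact hτ _ (hKi l hl)
  have f2 : lx (fun l => τ (l.map i)) (mp (fun x => -x) (h (2 * m - 1))) =
      lx (fun l => τ (l.map i)) (h (2 * m - 1)) := by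
    rw [lx_mp]
    refine lx_congr (hs _ (by omega)) (fun l hl => ?_)
    rw [himap l hl]
  rw [key m le_rfl, lx_dd] at f1
  have := hbd (2 * m - 1) (by omega)
  rw [show 2 * m - 1 + 1 = 2 * m by omega] at this
  rw [this, map_add, f2, z2_add_self] at f1
  exact one_ne_zero f1

end
end CT


namespace CT
noncomputable section
open Topology Filter

lemma isCompact_S (N : ℕ) : IsCompact {x : Fin N → ℝ | onS x} := by
  apply Metric.isCompact_of_isClosed_isBounded
  · exact isClosed_eq (by fun_prop) continuous_const
  · refine (Metric.isBounded_closedBall (x := (0 : Fin N → ℝ)) (r := 1)).subset ?_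
    intro x hx
    rw [mem_closedBall_zero_iff, pi_norm_le_iff_of_nonneg zero_le_one]
    intro i
    have hx : ∑ i, |x i| = 1 := hx
    rw [← hx, Real.norm_eq_abs]
    exact Finset.single_le_sum (f := fun i => |x i|) (fun i _ => abs_nonneg _) (Finset.mem_univ i)

lemma onS_neg {N : ℕ} {x : Fin N → ℝ} (h : onS x) : onS (-x) := by
  simpa [onS] using h

lemma int_zero_of_small (k : ℤ) (w : ℂ) (h : (k : ℂ) * (2 * Real.pi * Complex.I) = w)
    (hw : ‖w‖ < 4) : k = 0 := by
  by_contra hk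
  have h1 : (1 : ℝ) ≤ |(k : ℝ)| := by
    have := Int.one_le_abs hk
    exact_mod_cast this
  have h2 : ‖w‖ = |(k : ℝ)| * (2 * Real.pi) := by
    rw [← h]; simp [abs_of_pos Real.pi_pos]
  have := Real.pi_gt_three
  nlinarith

theorem step5 {N : ℕ} {ι : Type*} [Finite ι] [Nonempty ι] (A : ι → Set (Fin N → ℝ))
    (hAS : ∀ i x, x ∈ A i → onS x)
    (hAo : ∀ i x, x ∈ A i → ∀ᶠ y in 𝓝[{x | onS x}] x, y ∈ A i)
    (hcov : ∀ x, onS x → ∃ i, x ∈ A i) (hneg : ∀ i x, x ∈ A i → -x ∈ A i)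
    (c : ι → (Fin N → ℝ) → ℂ)
    (hc : ∀ i, ∀ x ∈ A i, ContinuousWithinAt (c i) {x | onS x} x)
    (hc0 : ∀ i, ∀ x ∈ A i, c i x ≠ 0) (hcn : ∀ i, ∀ x ∈ A i, c i (-x) = - c i x)
    (θ : ι → ι → (Fin N → ℝ) → ℂ)
    (hθ : ∀ i j, ∀ x ∈ A i, x ∈ A j → ContinuousWithinAt (θ i j) {x | onS x} x)
    (hθn : ∀ i j, ∀ x ∈ A i, x ∈ A j → θ i j (-x) = θ i j x)
    (hcθ : ∀ i j, ∀ x ∈ A i, x ∈ A j → c j x = c i x * Complex.exp (θ i j x))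
    (n : ι → ι → ι → ℤ)
    (hn : ∀ i j k, ∀ x ∈ A i, x ∈ A j → x ∈ A k →
      θ i j x + θ j k x - θ i k x = (n i j k : ℂ) * (2 * Real.pi * Complex.I)) :
    ∃ r : ℝ, 0 < r ∧ ∃ i : (Fin N → ℝ) → ι, ∃ b : (Fin N → ℝ) → (Fin N → ℝ) → ZMod 2,
      ∃ e : (Fin N → ℝ) → ZMod 2,
      (∀ x, onS x → i (-x) = i x) ∧
      (∀ x y, SL r [x, y] → x ∈ A (i y)) ∧
      (∀ x y z, SL r [x, y, z] → (n (i x) (i y) (i z) : ZMod 2) = b y z + b x z + b x y) ∧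
      (∀ x y, SL r [x, y] → b x y + b (-x) (-y) = e x + e y) ∧
      (∀ x, onS x → e x + e (-x) = 1) := by
  classical
  set S : Set (Fin N → ℝ) := {x | onS x} with hS
  have hSc : IsCompact S := isCompact_S N
  -- first Lebesgue number
  have hop : ∀ i, ∃ O : Set (Fin N → ℝ), IsOpen O ∧ A i = O ∩ S := by
    intro i
    refine ⟨interior (A i ∪ Sᶜ), isOpen_interior, ?_⟩
    ext x
    constructor
    · intro hx
      refine ⟨?_, hAS i x hx⟩
      rw [mem_interior_iff_mem_nhds]
      have := hAo i x hx
      rw [eventually_nhdsWithin_iff] at this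
      filter_upwards [this] with y hy
      by_cases hyS : y ∈ S
      · exact Or.inl (hy hyS)
      · exact Or.inr hyS
    · rintro ⟨hx, hxS⟩
      rcases interior_subset hx with h | h
      · exact h
      · exact absurd hxS h
  choose O hO hAO using hop
  obtain ⟨r0, hr0, hL0⟩ := lebesgue_number_lemma_of_metric (c := O) hSc hO (by
    intro x hx
    obtain ⟨i, hi⟩ := hcov x hx
    rw [hAO] at hi
    exact Set.mem_iUnion.2 ⟨i, hi.1⟩)
  let Gd : (Fin N → ℝ) → Set ι := fun x => {i | ∀ y, onS y → dist y x < r0 → y ∈ A i}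
  let i : (Fin N → ℝ) → ι := fun x => if h : (Gd x).Nonempty then h.some else Classical.arbitrary ι
  have hi : ∀ x, onS x → ∀ y, onS y → dist y x < r0 → y ∈ A (i x) := by
    intro x hx
    have hne : (Gd x).Nonempty := by
      obtain ⟨j, hj⟩ := hL0 x hx
      refine ⟨j, fun y hy hyx => ?_⟩
      rw [hAO]
      exact ⟨hj hyx, hy⟩
    have : i x ∈ Gd x := by
      simp only [i, dif_pos hne]; exact hne.some_mem
    exact this
  have hGn : ∀ x, Gd (-x) = Gd x := by
    have : ∀ x, Gd x ⊆ Gd (-x) := by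
      intro x j hj y hy hyx
      have := hneg j _ (hj (-y) (onS_neg hy) (by rwa [← dist_neg_neg, neg_neg]))
      rwa [neg_neg] at this
    intro x
    refine Set.Subset.antisymm ?_ (this x)
    simpa using this (-x)
  have hin : ∀ x, i (-x) = i x := by
    intro x
    simp only [i, hGn]
  have hself : ∀ x, onS x → x ∈ A (i x) := fun x hx => hi x hx x hx (by simpa using hr0)
  -- second Lebesgue number
  have hV : ∀ x0 : S, ∃ V : Set (Fin N → ℝ), IsOpen V ∧ x0.1 ∈ V ∧ ∀ x ∈ V, ∀ y ∈ V, onS x → onS y →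
      dist x x0.1 < r0 ∧ (∀ i, x0.1 ∈ A i → x ∈ A i) ∧
      (∀ i, x0.1 ∈ A i → ‖Complex.log (c i y / c i x)‖ < 1) ∧
      (∀ i j, x0.1 ∈ A i → x0.1 ∈ A j → ‖θ i j x - θ i j y‖ < 1) := by
    rintro ⟨x0, hx0⟩
    have hfst : Tendsto Prod.fst (𝓝[S] x0 ×ˢ 𝓝[S] x0) (𝓝[S] x0) := tendsto_fst
    have hsnd : Tendsto Prod.snd (𝓝[S] x0 ×ˢ 𝓝[S] x0) (𝓝[S] x0) := tendsto_snd
    have h1 : ∀ᶠ p in 𝓝[S] x0 ×ˢ 𝓝[S] x0, dist p.1 x0 < r0 :=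
      hfst.eventually (nhdsWithin_le_nhds (Metric.ball_mem_nhds x0 hr0))
    have h2 : ∀ᶠ p in 𝓝[S] x0 ×ˢ 𝓝[S] x0, ∀ i, x0 ∈ A i → p.1 ∈ A i := by
      rw [eventually_all]
      intro i
      by_cases hxi : x0 ∈ A i
      · filter_upwards [hfst.eventually (hAo i x0 hxi)] with p hp _ using hp
      · exact Eventually.of_forall (fun p h => absurd h hxi)
    have h3 : ∀ᶠ p in 𝓝[S] x0 ×ˢ 𝓝[S] x0, ∀ i, x0 ∈ A i → ‖Complex.log (c i p.2 / c i p.1)‖ < 1 := by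
      rw [eventually_all]
      intro i
      by_cases hxi : x0 ∈ A i
      · have t1 : Tendsto (fun p : (Fin N → ℝ) × (Fin N → ℝ) => c i p.2 / c i p.1)
            (𝓝[S] x0 ×ˢ 𝓝[S] x0) (𝓝 (c i x0 / c i x0)) :=
          Tendsto.div ((hc i x0 hxi).tendsto.comp hsnd) ((hc i x0 hxi).tendsto.comp hfst)
            (hc0 i x0 hxi)
        rw [div_self (hc0 i x0 hxi)] at t1
        have t2 := (t1.clog (by simp)).norm
        rw [Complex.log_one, norm_zero] at t2
        filter_upwards [t2.eventually_lt_const zero_lt_one] with p hp _ using hp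
      · exact Eventually.of_forall (fun p h => absurd h hxi)
    have h4 : ∀ᶠ p in 𝓝[S] x0 ×ˢ 𝓝[S] x0, ∀ i j, x0 ∈ A i → x0 ∈ A j →
        ‖θ i j p.1 - θ i j p.2‖ < 1 := by
      simp only [eventually_all]
      intro i j hxi hxj
      have t1 : Tendsto (fun p : (Fin N → ℝ) × (Fin N → ℝ) => θ i j p.1 - θ i j p.2)
            (𝓝[S] x0 ×ˢ 𝓝[S] x0) (𝓝 (θ i j x0 - θ i j x0)) :=
          Tendsto.sub ((hθ i j x0 hxi hxj).tendsto.comp hfst) ((hθ i j x0 hxi hxj).tendsto.comp hsnd)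
      rw [sub_self] at t1
      have t2 := t1.norm
      rw [norm_zero] at t2
      exact t2.eventually_lt_const zero_lt_one
    obtain ⟨t, ht, h⟩ := eventually_prod_self_iff'.1 (h1.and (h2.and (h3.and h4)))
    obtain ⟨V, hVo, hxV, hVt⟩ := mem_nhdsWithin.1 ht
    exact ⟨V, hVo, hxV, fun x hx y hy hxS hyS => h x (hVt ⟨hx, hxS⟩) y (hVt ⟨hy, hyS⟩)⟩
  choose V hVo hVm hVp using hV
  obtain ⟨r1, hr1, hL1⟩ := lebesgue_number_lemma_of_metric (c := V) hSc hVo (by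
    intro x hx
    exact Set.mem_iUnion.2 ⟨⟨x, hx⟩, hVm _⟩)
  -- logs
  have hlog : ∀ x, ∃ a : ℂ, onS x → Complex.exp a = c (i x) x := by
    intro x
    by_cases hx : onS x
    · exact ⟨Complex.log (c (i x) x), fun _ => Complex.exp_log (hc0 _ _ (hself x hx))⟩
    · exact ⟨0, fun h => absurd h hx⟩
  choose a ha using hlog
  set q : (Fin N → ℝ) → (Fin N → ℝ) → ℂ := fun x y => Complex.log (c (i x) y / c (i x) x) with hq
  have hbex : ∀ x y, ∃ k : ℤ, onS x → onS y → y ∈ A (i x) →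
      a y - a x - θ (i x) (i y) y - q x y = (k : ℂ) * (2 * Real.pi * Complex.I) := by
    intro x y
    by_cases h : onS x ∧ onS y ∧ y ∈ A (i x)
    · obtain ⟨hx, hy, hyx⟩ := h
      have h0 := hc0 _ _ hyx
      have h0' := hc0 _ _ (hself x hx)
      have : Complex.exp (a y - a x - θ (i x) (i y) y - q x y) = 1 := by
        rw [Complex.exp_sub, Complex.exp_sub, Complex.exp_sub, ha y hy, ha x hx, hq,
          Complex.exp_log (div_ne_zero h0 h0'), hcθ (i x) (i y) y hyx (hself y hy)]
        have := Complex.exp_ne_zero (θ (i x) (i y) y)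
        field_simp
      obtain ⟨k, hk⟩ := Complex.exp_eq_one_iff.1 this
      exact ⟨k, fun _ _ _ => hk⟩
    · exact ⟨0, fun h1 h2 h3 => absurd ⟨h1, h2, h3⟩ h⟩
  choose b hb using hbex
  have heex : ∀ x, ∃ k : ℤ, onS x →
      a (-x) - a x - Real.pi * Complex.I = (k : ℂ) * (2 * Real.pi * Complex.I) := by
    intro x
    by_cases hx : onS x
    · have h0 := hc0 _ _ (hself x hx)
      have : Complex.exp (a (-x) - a x - Real.pi * Complex.I) = 1 := by
        rw [Complex.exp_sub, Complex.exp_sub, ha _ (onS_neg hx), ha x hx, hin,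
          hcn _ _ (hself x hx), Complex.exp_pi_mul_I]
        field_simp
      obtain ⟨k, hk⟩ := Complex.exp_eq_one_iff.1 this
      exact ⟨k, fun _ => hk⟩
    · exact ⟨0, fun h => absurd h hx⟩
  choose e he using heex
  have h2pi : (2 * Real.pi * Complex.I : ℂ) ≠ 0 := Complex.two_pi_I_ne_zero
  have hclose : ∀ x y, onS x → onS y → dist y x < min r0 r1 → y ∈ A (i x) := fun x y hx hy h =>
    hi x hx y hy (h.trans_le (min_le_left _ _))
  refine ⟨min r0 r1, lt_min hr0 hr1, i, fun x y => (b x y : ZMod 2), fun x => (e x : ZMod 2),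
    fun x _ => hin x, ?_, ?_, ?_, ?_⟩
  · intro x y h
    exact hclose y x (h.1 y (by simp)) (h.1 x (by simp)) (h.2 x (by simp) y (by simp))
  · intro x y z h
    have hx := h.1 x (by simp)
    have hy := h.1 y (by simp)
    have hz := h.1 z (by simp)
    have hxy := h.2 x (by simp) y (by simp)
    have hxz := h.2 x (by simp) z (by simp)
    have hyz := h.2 y (by simp) z (by simp)
    obtain ⟨x0, hx0⟩ := hL1 x hx
    have xV : x ∈ V x0 := hx0 (by simpa using hr1)
    have yV : y ∈ V x0 := hx0 (by
      rw [Metric.mem_ball, dist_comm]; exact hxy.trans_le (min_le_right _ _))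
    have zV : z ∈ V x0 := hx0 (by
      rw [Metric.mem_ball, dist_comm]; exact hxz.trans_le (min_le_right _ _))
    have kx : x0.1 ∈ A (i x) := hi x hx _ x0.2 (by
      rw [dist_comm]; exact (hVp x0 x xV x xV hx hx).1)
    have ky : x0.1 ∈ A (i y) := hi y hy _ x0.2 (by
      rw [dist_comm]; exact (hVp x0 y yV y yV hy hy).1)
    have b1 := hb x y hx hy (hclose x y hx hy (by rwa [dist_comm]))
    have b2 := hb y z hy hz (hclose y z hy hz (by rwa [dist_comm]))
    have b3 := hb x z hx hz (hclose x z hx hz (by rwa [dist_comm]))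
    have q1 : ‖q x y‖ < 1 := (hVp x0 x xV y yV hx hy).2.2.1 _ kx
    have q2 : ‖q y z‖ < 1 := (hVp x0 y yV z zV hy hz).2.2.1 _ ky
    have q3 : ‖q x z‖ < 1 := (hVp x0 x xV z zV hx hz).2.2.1 _ kx
    have q4 : ‖θ (i x) (i y) z - θ (i x) (i y) y‖ < 1 := (hVp x0 z zV y yV hz hy).2.2.2 _ _ kx ky
    have nn := hn (i x) (i y) (i z) z (hclose x z hx hz (by rwa [dist_comm]))
      (hclose y z hy hz (by rwa [dist_comm])) (hself z hz)
    have hk : b x y + b y z - b x z + n (i x) (i y) (i z) = 0 := by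
      apply int_zero_of_small _ ((θ (i x) (i y) z - θ (i x) (i y) y) + (q x z - q x y - q y z))
      · push_cast
        linear_combination -b1 - b2 + b3 - nn
      · have n1 := norm_add_le (θ (i x) (i y) z - θ (i x) (i y) y) (q x z - q x y - q y z)
        have n2 := norm_sub_le (q x z - q x y) (q y z)
        have n3 := norm_sub_le (q x z) (q x y)
        linarith
    have hk2 : ((b x y + b y z - b x z + n (i x) (i y) (i z) : ℤ) : ZMod 2) = 0 := by rw [hk]; simp
    push_cast at hk2
    have t1 := z2_add_self (b x y : ZMod 2)
    have t2 := z2_add_self (b y z : ZMod 2)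
    have t3 := z2_add_self (b x z : ZMod 2)
    linear_combination hk2 - t1 - t2
  · intro x y h
    have hx := h.1 x (by simp)
    have hy := h.1 y (by simp)
    have hxy := h.2 x (by simp) y (by simp)
    have hyA := hclose x y hx hy (by rwa [dist_comm])
    have b1 := hb x y hx hy hyA
    have b2 := hb (-x) (-y) (onS_neg hx) (onS_neg hy) (by rw [hin]; exact hneg _ _ hyA)
    have e1 := he x hx
    have e2 := he y hy
    have hqq : q (-x) (-y) = q x y := by
      simp only [q, hin]
      rw [hcn _ _ hyA, hcn _ _ (hself x hx), neg_div_neg_eq]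
    rw [hqq, hin, hin, hθn _ _ _ hyA (hself y hy)] at b2
    have hk : b (-x) (-y) - b x y = e y - e x := by
      have : ((b (-x) (-y) - b x y : ℤ) : ℂ) = ((e y - e x : ℤ) : ℂ) := by
        apply mul_right_cancel₀ h2pi
        push_cast
        linear_combination b1 - b2 + e2 - e1
      exact_mod_cast this
    have hk2 : ((b (-x) (-y) - b x y : ℤ) : ZMod 2) = ((e y - e x : ℤ) : ZMod 2) := by rw [hk]
    push_cast at hk2
    have t1 := z2_add_self (b x y : ZMod 2)
    have t2 := z2_add_self (e x : ZMod 2)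
    show (b x y : ZMod 2) + b (-x) (-y) = e x + e y
    linear_combination hk2 + t1 - t2
  · intro x hx
    have e1 := he x hx
    have e2 := he (-x) (onS_neg hx)
    rw [neg_neg] at e2
    have hk : e x + e (-x) = -1 := by
      have : ((e x + e (-x) : ℤ) : ℂ) = ((-1 : ℤ) : ℂ) := by
        apply mul_right_cancel₀ h2pi
        push_cast
        linear_combination - e2 - e1
      exact_mod_cast this
    have hk2 : ((e x + e (-x) : ℤ) : ZMod 2) = ((-1 : ℤ) : ZMod 2) := by rw [hk]
    push_cast at hk2
    show (e x : ZMod 2) + e (-x) = 1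
    rw [hk2]; rfl

end
end CT


namespace CT
noncomputable section
open Topology Filter
open scoped Matrix

abbrev EE (m : ℕ) := Fin (m + 1) → ℂ

/-- `v` is a nonzero vector on the line `p`. -/
def L {m : ℕ} (p : CP m) (v : EE m) : Prop :=
  ∃ hv : v ≠ 0, (Projectivization.mk ℂ v hv : Projectivization ℂ (Fin (m + 1) → ℂ)) = p

lemma L.ne {m : ℕ} {p : CP m} {v : EE m} (h : L p v) : v ≠ 0 := h.1

lemma L_ex {m : ℕ} (p : CP m) : ∃ v, L p v :=
  ⟨Projectivization.rep p, Projectivization.rep_nonzero p, Projectivization.mk_rep p⟩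

lemma L_smul {m : ℕ} {p : CP m} {v : EE m} (h : L p v) {a : ℂ} (ha : a ≠ 0) : L p (a • v) := by
  obtain ⟨hv, rfl⟩ := h
  refine ⟨smul_ne_zero ha hv, ?_⟩
  rw [Projectivization.mk_eq_mk_iff']
  exact ⟨a, rfl⟩

lemma L_eq {m : ℕ} {p : CP m} {v w : EE m} (h : L p v) (h' : L p w) : ∃ a : ℂ, a ≠ 0 ∧ v = a • w := by
  obtain ⟨hv, rfl⟩ := h
  obtain ⟨hw, h'⟩ := h'
  obtain ⟨a, ha⟩ := (Projectivization.mk_eq_mk_iff' ℂ _ _ _ _).1 h'.symm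
  refine ⟨a, ?_, ha.symm⟩
  rintro rfl
  exact hv (by rw [← ha, zero_smul])

/-- the class of a vector -/
def cl {m : ℕ} (v : {v : EE m // v ≠ 0}) : CP m := Projectivization.mk ℂ v.1 v.2

lemma continuous_cl {m : ℕ} : Continuous (cl (m := m)) := continuous_quotient_mk'

lemma L_cl {m : ℕ} (v : {v : EE m // v ≠ 0}) : L (cl v) v.1 := ⟨v.2, rfl⟩

def nq {m : ℕ} (v : EE m) : ℂ := ∑ a, v a * star (v a)

lemma nq_ne {m : ℕ} {v : EE m} (h : v ≠ 0) : nq v ≠ 0 := by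
  intro h0
  apply h
  have : nq v = ((∑ a, Complex.normSq (v a) : ℝ) : ℂ) := by
    push_cast
    exact Finset.sum_congr rfl (fun a _ => Complex.mul_conj _)
  rw [this, Complex.ofReal_eq_zero, Finset.sum_eq_zero_iff_of_nonneg
    (fun a _ => Complex.normSq_nonneg _)] at h0
  funext a
  exact Complex.normSq_eq_zero.1 (h0 a (Finset.mem_univ a))

lemma nq_smul {m : ℕ} (a : ℂ) (v : EE m) : nq (a • v) = (a * star a) * nq v := by
  simp only [nq, Finset.mul_sum]
  refine Finset.sum_congr rfl (fun b _ => ?_)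
  simp; ring

/-- projection matrix -/
def M0 {m : ℕ} (v : EE m) : Matrix (Fin (m + 1)) (Fin (m + 1)) ℂ :=
  Matrix.of fun a b => v a * star (v b) / nq v

lemma M0_smul {m : ℕ} {a : ℂ} (ha : a ≠ 0) (v : EE m) : M0 (a • v) = M0 v := by
  ext i j
  have : star a ≠ 0 := by simpa using ha
  simp only [M0, Matrix.of_apply, nq_smul]
  by_cases h : nq v = 0
  · simp [h]
  · simp only [Pi.smul_apply, smul_eq_mul, star_mul']
    field_simp

def MM {m : ℕ} (p : CP m) : Matrix (Fin (m + 1)) (Fin (m + 1)) ℂ := M0 (L_ex p).choose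

lemma MM_eq {m : ℕ} {p : CP m} {v : EE m} (h : L p v) : MM p = M0 v := by
  obtain ⟨a, ha, e⟩ := L_eq (L_ex p).choose_spec h
  rw [MM, e, M0_smul ha]

lemma continuous_MM {m : ℕ} : Continuous (MM (m := m)) := by
  have h1 : Continuous (fun v : {v : EE m // v ≠ 0} => M0 v.1) := by
    refine continuous_matrix (fun a b => ?_)
    simp only [M0, Matrix.of_apply]
    have hc : ∀ a, Continuous (fun v : {v : EE m // v ≠ 0} => v.1 a) := fun a =>
      (continuous_apply a).comp continuous_subtype_val
    refine Continuous.div ((hc a).mul (hc b).star) ?_ (fun v => nq_ne v.2)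
    exact continuous_finsetSum _ (fun a _ => (hc a).mul (hc a).star)
  have h2 : Continuous (MM (m := m) ∘ cl) := by
    convert h1 using 1
    funext v
    exact MM_eq (L_cl v)
  exact (isQuotientMap_quotient_mk'.continuous_iff (Y := CP m)).2 h2

lemma M0_mulVec {m : ℕ} (v w : EE m) : M0 v *ᵥ w = ((∑ b, star (v b) * w b) / nq v) • v := by
  ext a
  simp only [Matrix.mulVec, dotProduct, M0, Matrix.of_apply, Pi.smul_apply, smul_eq_mul,
    Finset.sum_div, Finset.sum_mul]
  exact Finset.sum_congr rfl (fun b _ => by ring)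

lemma MM_self {m : ℕ} {p : CP m} {v : EE m} (h : L p v) : MM p *ᵥ v = v := by
  rw [MM_eq h, M0_mulVec]
  have : ∑ b, star (v b) * v b = nq v := Finset.sum_congr rfl (fun b _ => by ring)
  rw [this, div_self (nq_ne h.ne), one_smul]

lemma MM_L {m : ℕ} (p : CP m) (w : EE m) (h : MM p *ᵥ w ≠ 0) : L p (MM p *ᵥ w) := by
  obtain ⟨v, hv⟩ := L_ex p
  rw [MM_eq hv, M0_mulVec] at h ⊢
  refine L_smul hv ?_
  intro h0
  rw [h0, zero_smul] at h
  exact h rfl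

/-- non-orthogonality measure -/
def no {m : ℕ} (p q : CP m) : ℝ := ∑ a, ∑ b, ‖(MM p * MM q) a b‖

lemma no_nonneg {m : ℕ} (p q : CP m) : 0 ≤ no p q :=
  Finset.sum_nonneg (fun _ _ => Finset.sum_nonneg (fun _ _ => norm_nonneg _))

lemma continuous_no {m : ℕ} {Z : Type*} [TopologicalSpace Z] {f g : Z → CP m} (hf : Continuous f)
    (hg : Continuous g) : Continuous (fun x => no (f x) (g x)) := by
  have h : Continuous (fun x => MM (f x) * MM (g x)) :=
    (continuous_MM.comp hf).matrix_mul (continuous_MM.comp hg)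
  unfold no
  refine continuous_finsetSum _ (fun a _ => continuous_finsetSum _ (fun b _ => ?_))
  exact (h.matrix_elem a b).norm

lemma no_zero {m : ℕ} {p q : CP m} (h : no p q = 0) : MM p * MM q = 0 := by
  ext a b
  have h1 := (Finset.sum_eq_zero_iff_of_nonneg
    (fun _ _ => Finset.sum_nonneg (fun _ _ => norm_nonneg _))).1 h a (Finset.mem_univ a)
  have h2 := (Finset.sum_eq_zero_iff_of_nonneg (fun _ _ => norm_nonneg _)).1 h1 b (Finset.mem_univ b)
  simpa using h2

lemma no_self {m : ℕ} (p : CP m) : 0 < no p p := by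
  refine lt_of_le_of_ne (no_nonneg p p) (fun h => ?_)
  have h0 := no_zero h.symm
  obtain ⟨v, hv⟩ := L_ex p
  have : (MM p * MM p) *ᵥ v = v := by
    rw [← Matrix.mulVec_mulVec, MM_self hv, MM_self hv]
  rw [h0, Matrix.zero_mulVec] at this
  exact hv.ne this.symm

lemma no_pos {m : ℕ} {p q : CP m} (h : 0 < no p q) {w : EE m} (hw : L q w) : MM p *ᵥ w ≠ 0 := by
  intro h0
  have : MM p * MM q = 0 := by
    apply Matrix.toLin'.injective
    ext1 u
    ext1
    simp only [Matrix.toLin'_mul, LinearMap.comp_apply, Matrix.toLin'_apply, map_zero,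
      LinearMap.zero_apply]
    rw [MM_eq hw, M0_mulVec, Matrix.mulVec_smul, h0, smul_zero]
  unfold no at h
  rw [this] at h
  simp at h

theorem transport {m : ℕ} {Z : Type*} [TopologicalSpace Z] (H : Z → ℝ → CP m)
    (hH : Continuous (fun x : Z × ℝ => H x.1 x.2)) (v : Z → EE m) (hv : Continuous v)
    (hL : ∀ z, L (H z 0) (v z)) :
    ∃ w : Z → EE m, Continuous w ∧ (∀ z, L (H z 1) (w z)) ∧
      ∀ z z', (∀ t, H z t = H z' t) → v z' = - v z → w z' = - w z := by
  let s : Z → ℝ := fun z => sInf ((fun p : ℝ × ℝ => |p.1 - p.2| + no (H z p.1) (H z p.2)) ''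
    (Set.Icc 0 1 ×ˢ Set.Icc 0 1))
  have hcomp : IsCompact (Set.Icc (0 : ℝ) 1 ×ˢ Set.Icc (0 : ℝ) 1) := isCompact_Icc.prod isCompact_Icc
  have hf : Continuous (fun x : Z × (ℝ × ℝ) => |x.2.1 - x.2.2| + no (H x.1 x.2.1) (H x.1 x.2.2)) := by
    have k1 : Continuous (fun x : Z × (ℝ × ℝ) => x.2.1) := continuous_fst.comp continuous_snd
    have k2 : Continuous (fun x : Z × (ℝ × ℝ) => x.2.2) := continuous_snd.comp continuous_snd
    have k3 : Continuous (fun x : Z × (ℝ × ℝ) => H x.1 x.2.1) :=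
      hH.comp (continuous_fst.prodMk k1)
    have k4 : Continuous (fun x : Z × (ℝ × ℝ) => H x.1 x.2.2) :=
      hH.comp (continuous_fst.prodMk k2)
    have k5 : Continuous (fun x : Z × (ℝ × ℝ) => no (H x.1 x.2.1) (H x.1 x.2.2)) :=
      continuous_no k3 k4
    exact ((k1.sub k2).abs).add k5
  have hs : Continuous s :=
    hcomp.continuous_sInf (f := fun z (p : ℝ × ℝ) => |p.1 - p.2| + no (H z p.1) (H z p.2)) hf
  have hne : (Set.Icc (0 : ℝ) 1 ×ˢ Set.Icc (0 : ℝ) 1).Nonempty := ⟨(0, 0), by simp⟩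
  have hs0 : ∀ z, 0 < s z := by
    intro z
    have hfz : Continuous (fun p : ℝ × ℝ => |p.1 - p.2| + no (H z p.1) (H z p.2)) :=
      hf.comp (f := fun p : ℝ × ℝ => (z, p)) (by fun_prop)
    obtain ⟨p, hp, h1⟩ := hcomp.exists_sInf_image_eq hne hfz.continuousOn
    show 0 < sInf _
    rw [h1]
    rcases eq_or_ne p.1 p.2 with h | h
    · have := no_self (H z p.2)
      simp only [h]
      have := abs_nonneg (p.2 - p.2)
      linarith
    · have := abs_pos.2 (sub_ne_zero.2 h)
      have := no_nonneg (H z p.1) (H z p.2)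
      linarith
  have hsl : ∀ z, ∀ t ∈ Set.Icc (0 : ℝ) 1, ∀ t' ∈ Set.Icc (0 : ℝ) 1, |t - t'| < s z →
      0 < no (H z t) (H z t') := by
    intro z t ht t' ht' h
    have : s z ≤ |t - t'| + no (H z t) (H z t') := by
      refine csInf_le ⟨0, ?_⟩ ⟨(t, t'), ⟨ht, ht'⟩, rfl⟩
      rintro _ ⟨p, -, rfl⟩
      exact add_nonneg (abs_nonneg _) (no_nonneg _ _)
    linarith
  let T : ℕ → Z → ℝ := fun j z => min (j * (s z / 2)) 1
  have hTc : ∀ j, Continuous (T j) := fun j => by simp only [T]; fun_prop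
  have hT01 : ∀ j z, T j z ∈ Set.Icc (0 : ℝ) 1 := by
    intro j z
    refine ⟨le_min ?_ zero_le_one, min_le_right _ _⟩
    have := hs0 z
    positivity
  have hTd : ∀ j z, |T (j + 1) z - T j z| < s z := by
    intro j z
    have := hs0 z
    simp only [T]
    have h1 := abs_min_sub_min_le_max ((↑(j + 1) : ℝ) * (s z / 2)) 1 (j * (s z / 2)) 1
    refine h1.trans_lt ?_
    push_cast
    rw [show ((j : ℝ) + 1) * (s z / 2) - j * (s z / 2) = s z / 2 by ring, sub_self, abs_zero,
      abs_of_pos (by linarith), max_eq_left (by linarith)]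
    linarith
  let W : ℕ → Z → EE m := fun j => Nat.rec v (fun j w z => MM (H z (T (j + 1) z)) *ᵥ w z) j
  have hW0 : W 0 = v := rfl
  have hWs : ∀ j z, W (j + 1) z = MM (H z (T (j + 1) z)) *ᵥ W j z := fun j z => rfl
  have hWc : ∀ j, Continuous (W j) := by
    intro j
    induction j with
    | zero => exact hv
    | succ j ih =>
      refine Continuous.matrix_mulVec (continuous_MM.comp ?_) ih
      exact hH.comp (f := fun z => (z, T (j + 1) z)) (by fun_prop)
  have hWL : ∀ j z, L (H z (T j z)) (W j z) := by
    intro j z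
    induction j with
    | zero => rw [hW0]; simpa [T] using hL z
    | succ j ih =>
      rw [hWs]
      exact MM_L _ _ (no_pos (hsl z _ (hT01 _ _) _ (hT01 _ _) (hTd j z)) ih)
  have hT1 : ∀ (j : ℕ) z, 2 / s z ≤ j → T j z = 1 := by
    intro j z h
    have := hs0 z
    rw [div_le_iff₀ this] at h
    exact min_eq_right (by linarith)
  have hstab : ∀ z (j k : ℕ), 2 / s z ≤ j → W (j + k) z = W j z := by
    intro z j k h
    induction k with
    | zero => rfl
    | succ k ih =>
      have h1 : 2 / s z ≤ ((j + k : ℕ) : ℝ) := by push_cast; linarith [(Nat.cast_nonneg k : (0:ℝ) ≤ k)]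
      have h2 : 2 / s z ≤ ((j + k + 1 : ℕ) : ℝ) := by push_cast at h1 ⊢; linarith
      have h3 := hWL (j + k) z
      rw [hT1 _ _ h1] at h3
      rw [← add_assoc, hWs, hT1 _ _ h2, MM_self h3, ih]
  have heq : ∀ z (j k : ℕ), 2 / s z ≤ j → 2 / s z ≤ k → W j z = W k z := by
    intro z j k hj hk
    rcases le_total j k with h | h
    · obtain ⟨d, rfl⟩ := Nat.exists_eq_add_of_le h
      exact (hstab z j d hj).symm
    · obtain ⟨d, rfl⟩ := Nat.exists_eq_add_of_le h
      exact hstab z k d hk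
  refine ⟨fun z => W ⌈2 / s z⌉₊ z, ?_, ?_, ?_⟩
  · rw [continuous_iff_continuousAt]
    intro z0
    have h0 := hs0 z0
    have hev : ∀ᶠ z in 𝓝 z0, s z0 / 2 < s z :=
      hs.continuousAt.eventually_const_lt (by linarith)
    refine (hWc ⌈4 / s z0⌉₊).continuousAt.congr ?_
    filter_upwards [hev] with z hz
    refine heq z _ _ (le_trans ?_ (Nat.le_ceil _)) (Nat.le_ceil _)
    rw [div_le_div_iff₀ (hs0 z) h0]
    linarith
  · intro z
    have := hWL ⌈2 / s z⌉₊ z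
    rwa [hT1 _ _ (Nat.le_ceil _)] at this
  · intro z z' hz hvz
    have hsz : s z' = s z := by simp only [s, hz]
    have hTz : ∀ j, T j z' = T j z := by intro j; simp only [T, hsz]
    have : ∀ j, W j z' = - W j z := by
      intro j
      induction j with
      | zero => exact hvz
      | succ j ih => rw [hWs, hWs, ih, hTz, hz, Matrix.mulVec_neg]
    simp only [hsz, this]

end
end CT


namespace CT
noncomputable section
open Topology Filter
open scoped Matrix unitInterval

def pj (t : ℝ) : I := Set.projIcc 0 1 zero_le_one t

lemma continuous_pj : Continuous pj := by
  unfold pj; exact continuous_projIcc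
lemma pj_zero : pj 0 = 0 := Set.projIcc_left _
lemma pj_one : pj 1 = 1 := Set.projIcc_right _

lemma lift_contr {m : ℕ} {Z : Type*} [TopologicalSpace Z] (hZ : IsEmpty Z ∨ ContractibleSpace Z)
    (G : Z → CP m) (hG : Continuous G) : ∃ u : Z → EE m, Continuous u ∧ ∀ z, L (G z) (u z) := by
  rcases hZ with hZ | hZ
  · exact ⟨fun _ => 0, continuous_const, fun z => hZ.elim z⟩
  · obtain ⟨y, ⟨h⟩⟩ := id_nullhomotopic Z
    obtain ⟨v, hv⟩ := L_ex (G y)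
    obtain ⟨w, hw, hL, -⟩ := transport (fun z t => G (h.symm (pj t, z))) (by
      refine hG.comp (h.symm.continuous.comp ?_)
      exact (continuous_pj.comp continuous_snd).prodMk continuous_fst) (fun _ => v) continuous_const (by
      intro z
      simpa [pj_zero] using hv)
    refine ⟨w, hw, fun z => ?_⟩
    simpa [pj_one] using hL z

lemma log_contr {Z : Type*} [TopologicalSpace Z] (hZ : IsEmpty Z ∨ ContractibleSpace Z)
    (g : Z → ℂ) (hg : Continuous g) (h0 : ∀ z, g z ≠ 0) :
    ∃ θ : Z → ℂ, Continuous θ ∧ ∀ z, Complex.exp (θ z) = g z := by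
  rcases hZ with hZ | hZ
  · exact ⟨fun _ => 0, continuous_const, fun z => hZ.elim z⟩
  · obtain ⟨y, ⟨h⟩⟩ := id_nullhomotopic Z
    have hc : Continuous (fun p : I × Z => (⟨g (h.symm p), h0 _⟩ : {z : ℂ // z ≠ 0})) :=
      Continuous.subtype_mk (hg.comp h.symm.continuous) _
    let H : C(I × Z, {z : ℂ // z ≠ 0}) := ⟨_, hc⟩
    have H0 : ∀ a, H (0, a) = (⟨_, Complex.exp_ne_zero (ContinuousMap.const Z (Complex.log (g y)) a)⟩ : {z : ℂ // z ≠ 0}) := by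
      intro a
      apply Subtype.ext
      simp [H, Complex.exp_log (h0 y)]
    refine ⟨fun z => Complex.isCoveringMap_exp.liftHomotopy H _ H0 (1, z), ?_, ?_⟩
    · exact (ContinuousMap.continuous _).comp (Continuous.prodMk continuous_const continuous_id)
    · intro z
      have := congrArg Subtype.val
        (congr_fun (Complex.isCoveringMap_exp.liftHomotopy_lifts H _ H0) (1, z))
      refine this.trans ?_
      simp [H]

/-- coefficient -/
def co {m : ℕ} (v w : EE m) : ℂ := (∑ a, v a * star (w a)) / nq w

lemma co_smul {m : ℕ} (a : ℂ) {w : EE m} (h : w ≠ 0) : co (a • w) w = a := by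
  have : ∑ b, (a • w) b * star (w b) = a * nq w := by
    rw [nq, Finset.mul_sum]
    exact Finset.sum_congr rfl (fun b _ => by simp [mul_assoc])
  rw [co, this, mul_div_cancel_right₀ _ (nq_ne h)]

lemma co_spec {m : ℕ} {p : CP m} {v w : EE m} (h : L p v) (h' : L p w) :
    co v w ≠ 0 ∧ v = co v w • w := by
  obtain ⟨a, ha, rfl⟩ := L_eq h h'
  rw [co_smul a h'.ne]
  exact ⟨ha, rfl⟩

lemma co_neg {m : ℕ} (v w : EE m) : co (-v) w = - co v w := by
  simp [co, neg_div]

lemma cwa_co {m : ℕ} {Z : Type*} [TopologicalSpace Z] {s : Set Z} {z : Z} {v w : Z → EE m}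
    (hv : ContinuousWithinAt v s z) (hw : ContinuousWithinAt w s z) (h : w z ≠ 0) :
    ContinuousWithinAt (fun z => co (v z) (w z)) s z := by
  have h1 : ∀ a, ContinuousWithinAt (fun z => v z a) s z := fun a =>
    (continuous_apply a).continuousAt.comp_continuousWithinAt hv
  have h2 : ∀ a, ContinuousWithinAt (fun z => w z a) s z := fun a =>
    (continuous_apply a).continuousAt.comp_continuousWithinAt hw
  refine ContinuousWithinAt.div ?_ ?_ (nq_ne h)
  · exact tendsto_finsetSum _ (fun a _ => (h1 a).mul (h2 a).star)
  · exact tendsto_finsetSum _ (fun a _ => (h2 a).mul (h2 a).star)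

lemma continuousOn_ext {Y X : Type*} [TopologicalSpace Y] [TopologicalSpace X] [Nonempty X] {s : Set Y}
    (f : s → X) (hf : Continuous f) : ∃ F : Y → X, ContinuousOn F s ∧ ∀ y : s, F y = f y := by
  classical
  obtain ⟨x0⟩ := ‹Nonempty X›
  refine ⟨fun y => if h : y ∈ s then f ⟨y, h⟩ else x0, ?_, fun y => by simp⟩
  rw [continuousOn_iff_continuous_domRestrict]
  convert hf using 1
  funext y
  simp

lemma int_const {Y : Type*} [TopologicalSpace Y] {s : Set Y} (hs : IsPreconnected s) (f : Y → ℂ)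
    (hf : ContinuousOn f s) (h : ∀ y ∈ s, ∃ k : ℤ, f y = (k : ℂ) * (2 * Real.pi * Complex.I)) :
    ∃ k : ℤ, ∀ y ∈ s, f y = (k : ℂ) * (2 * Real.pi * Complex.I) := by
  rcases s.eq_empty_or_nonempty with rfl | ⟨y0, hy0⟩
  · exact ⟨0, by simp⟩
  obtain ⟨k0, hk0⟩ := h y0 hy0
  refine ⟨k0, fun y hy => ?_⟩
  have hd : DiscreteTopology (Set.range ((↑) : ℤ → ℝ)) := by
    exact Int.isClosedEmbedding_coe_real.isEmbedding.toHomeomorph.symm.isEmbedding.discreteTopology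
  have hpi : (0 : ℝ) < 2 * Real.pi := by positivity
  have hF : ∀ (k : ℤ) (w : ℂ), w = (k : ℂ) * (2 * Real.pi * Complex.I) → w.im / (2 * Real.pi) = k := by
    rintro k w rfl
    rw [div_eq_iff hpi.ne']
    simp
  have hcont : ContinuousOn (fun y => (f y).im / (2 * Real.pi)) s :=
    (Complex.continuous_im.comp_continuousOn hf).div_const _
  have hm : Set.MapsTo (fun y => (f y).im / (2 * Real.pi)) s (Set.range ((↑) : ℤ → ℝ)) := by
    intro y hy
    obtain ⟨k, hk⟩ := h y hy
    exact ⟨k, (hF k _ hk).symm⟩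
  have := hs.constant_of_mapsTo ⟨hd⟩ hcont hm hy hy0
  obtain ⟨k, hk⟩ := h y hy
  simp only [hF k _ hk, hF k0 _ hk0] at this
  rw [hk, Int.cast_injective this]

theorem bundle {m : ℕ} {Y : Type*} [TopologicalSpace Y] (g : Y → CP m) (hg : Continuous g)
    {ι : Type*} (U : ι → Set Y)
    (h1 : ∀ i, IsEmpty (U i) ∨ ContractibleSpace (U i))
    (h2 : ∀ i j, IsEmpty (U i ∩ U j : Set Y) ∨ ContractibleSpace (U i ∩ U j : Set Y))
    (h3 : ∀ i j k, IsPreconnected (U i ∩ U j ∩ U k)) :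
    ∃ u : ι → Y → EE m, ∃ θ : ι → ι → Y → ℂ, ∃ n : ι → ι → ι → ℤ,
      (∀ i, ContinuousOn (u i) (U i)) ∧ (∀ i, ∀ y ∈ U i, L (g y) (u i y)) ∧
      (∀ i j, ContinuousOn (θ i j) (U i ∩ U j)) ∧
      (∀ i j, ∀ y ∈ U i, y ∈ U j → u i y = Complex.exp (θ i j y) • u j y) ∧
      (∀ i j k, ∀ y ∈ U i, y ∈ U j → y ∈ U k →
        θ i j y + θ j k y - θ i k y = (n i j k : ℂ) * (2 * Real.pi * Complex.I)) := by
  have hu : ∀ i, ∃ u : Y → EE m, ContinuousOn u (U i) ∧ ∀ y ∈ U i, L (g y) (u y) := by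
    intro i
    obtain ⟨u, hu, hL⟩ := lift_contr (h1 i) (fun y : U i => g y) (hg.comp continuous_subtype_val)
    obtain ⟨F, hF, hFu⟩ := continuousOn_ext u hu
    refine ⟨F, hF, fun y hy => ?_⟩
    have := hL ⟨y, hy⟩
    rwa [← hFu] at this
  choose u huc huL using hu
  have hθ : ∀ i j, ∃ θ : Y → ℂ, ContinuousOn θ (U i ∩ U j) ∧
      ∀ y ∈ U i, y ∈ U j → u i y = Complex.exp (θ y) • u j y := by
    intro i j
    have hcon : ContinuousOn (fun y => co (u i y) (u j y)) (U i ∩ U j) := by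
      intro y hy
      exact cwa_co ((huc i y hy.1).mono Set.inter_subset_left)
        ((huc j y hy.2).mono Set.inter_subset_right) (huL j y hy.2).ne
    obtain ⟨θ, hθ, he⟩ := log_contr (h2 i j) (fun y : (U i ∩ U j : Set Y) => co (u i y) (u j y))
      (continuousOn_iff_continuous_domRestrict.1 hcon)
      (fun y => (co_spec (huL i y y.2.1) (huL j y y.2.2)).1)
    obtain ⟨F, hF, hFu⟩ := continuousOn_ext θ hθ
    refine ⟨F, hF, fun y hy hy' => ?_⟩
    have e1 := hFu ⟨y, hy, hy'⟩
    have e2 := he ⟨y, hy, hy'⟩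
    rw [← e1] at e2
    rw [e2]
    exact (co_spec (huL i y hy) (huL j y hy')).2
  choose θ hθc hθe using hθ
  have hn : ∀ i j k, ∃ n : ℤ, ∀ y ∈ U i ∩ U j ∩ U k,
      θ i j y + θ j k y - θ i k y = (n : ℂ) * (2 * Real.pi * Complex.I) := by
    intro i j k
    apply int_const (h3 i j k) (fun y => θ i j y + θ j k y - θ i k y)
    · refine ((((hθc i j).mono ?_).add ((hθc j k).mono ?_)).sub ((hθc i k).mono ?_))
      · exact fun y hy => hy.1
      · exact fun y hy => ⟨hy.1.2, hy.2⟩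
      · exact fun y hy => ⟨hy.1.1, hy.2⟩
    · rintro y ⟨⟨hi, hj⟩, hk⟩
      apply Complex.exp_eq_one_iff.1
      have e1 := hθe i j y hi hj
      rw [hθe j k y hj hk, hθe i k y hi hk, smul_smul] at e1
      have e2 := smul_left_injective ℂ (huL k y hk).ne e1
      rw [Complex.exp_sub, Complex.exp_add, ← e2, div_self (Complex.exp_ne_zero _)]
  choose n hn using hn
  exact ⟨u, θ, n, huc, huL, hθc, hθe, fun i j k y a b c => hn i j k y ⟨⟨a, b⟩, c⟩⟩

end
end CT


namespace CT
noncomputable section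
open Topology Filter

def emb {m : ℕ} (x : Fin (2 * m + 1) → ℝ) : EE m := fun a =>
  (x ⟨2 * a, by omega⟩ : ℂ) +
    ((if h : 2 * (a : ℕ) + 1 < 2 * m + 1 then x ⟨2 * a + 1, h⟩ else 0 : ℝ) : ℂ) * Complex.I

lemma emb_neg {m : ℕ} (x : Fin (2 * m + 1) → ℝ) : emb (-x) = - emb x := by
  funext a
  simp only [emb, Pi.neg_apply]
  split_ifs <;> simp <;> ring

lemma continuous_emb {m : ℕ} : Continuous (emb (m := m)) := by
  refine continuous_pi (fun a => ?_)
  simp only [emb]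
  split_ifs <;> fun_prop

lemma emb_ne {m : ℕ} {x : Fin (2 * m + 1) → ℝ} (hx : onS x) : emb x ≠ 0 := by
  intro h
  have h0 : x = 0 := by
    funext k
    obtain ⟨k, hk⟩ := k
    rcases Nat.even_or_odd' k with ⟨a, rfl | rfl⟩
    · have := congrArg Complex.re (congrFun h ⟨a, by omega⟩)
      simpa [emb] using this
    · have := congrArg Complex.im (congrFun h ⟨a, by omega⟩)
      simpa [emb, hk] using this
  subst h0
  simp [onS] at hx

lemma cover_contr {Y : Type*} [TopologicalSpace Y] {U : Finset (Set Y)} (hU : IsGoodCover U)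
    (T : Finset (Set Y)) (s : Set Y) (hs : ⋂₀ (T : Set (Set Y)) = s) (hT : T ⊆ U) (hne : T.Nonempty) :
    IsEmpty s ∨ ContractibleSpace s := by
  subst hs
  rcases Set.eq_empty_or_nonempty (⋂₀ (T : Set (Set Y))) with h | h
  · left; exact Set.isEmpty_coe_sort.2 h
  · right; exact hU.2.2 T hT hne h

theorem main (m : ℕ) (hm : 1 ≤ m) (Y : Type*) [TopologicalSpace Y]
    (h : Nonempty (ContinuousMap.HomotopyEquiv (CP m) Y))
    (U : Finset (Set Y)) (hU : IsGoodCover U) :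
    (m + 1) ^ 2 ≤ U.card := by
  classical
  by_contra hlt
  push Not at hlt
  obtain ⟨E⟩ := h
  obtain ⟨hh⟩ := E.left_inv
  let S : Set (Fin (2 * m + 1) → ℝ) := {x | onS x}
  let ec : S → CP m := fun x => cl ⟨emb x.1, emb_ne x.2⟩
  have hec : Continuous ec := continuous_cl.comp
    (Continuous.subtype_mk (continuous_emb.comp continuous_subtype_val) _)
  have hSne : Nonempty S := ⟨⟨Pi.single 0 1, by
    show onS _
    unfold onS
    rw [Finset.sum_eq_single 0] <;> simp +contextual⟩⟩
  obtain ⟨x00⟩ := hSne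
  have hYne : Nonempty Y := ⟨E.toFun (ec x00)⟩
  have hecn : ∀ (x : S), ec ⟨-x.1, onS_neg x.2⟩ = ec x := by
    intro x
    show Projectivization.mk ℂ _ _ = Projectivization.mk ℂ _ _
    rw [Projectivization.mk_eq_mk_iff']
    exact ⟨-1, by simp [emb_neg]⟩
  -- kappa
  obtain ⟨w, hw, hwL, hwn⟩ := transport (Z := S) (fun z t => hh.symm (pj t, ec z)) (by
      refine hh.symm.continuous.comp ?_
      exact (continuous_pj.comp continuous_snd).prodMk (hec.comp continuous_fst))
    (fun z => emb z.1) (continuous_emb.comp continuous_subtype_val) (by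
      intro z
      simpa [pj_zero] using L_cl ⟨emb z.1, emb_ne z.2⟩)
  obtain ⟨κ, hκc, hκ⟩ := continuousOn_ext w hw
  obtain ⟨φ, hφc, hφ⟩ := continuousOn_ext (fun x : S => E.toFun (ec x)) (E.toFun.continuous.comp hec)
  have hφn : ∀ x, onS x → φ (-x) = φ x := by
    intro x hx
    have e1 := hφ ⟨x, hx⟩
    have e2 := hφ ⟨-x, onS_neg hx⟩
    rw [hecn ⟨x, hx⟩] at e2
    exact e2.trans e1.symm
  have hκn : ∀ x, onS x → κ (-x) = - κ x := by
    intro x hx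
    have e1 := hκ ⟨x, hx⟩
    have e2 := hκ ⟨-x, onS_neg hx⟩
    have e3 := hwn ⟨x, hx⟩ ⟨-x, onS_neg hx⟩ (fun t => by rw [hecn ⟨x, hx⟩]) (emb_neg x)
    exact (e2.trans e3).trans (by rw [← e1])
  have hκL : ∀ x, onS x → L (E.invFun (φ x)) (κ x) := by
    intro x hx
    have e0 := hwL ⟨x, hx⟩
    have e1 := hκ ⟨x, hx⟩
    have e2 := hφ ⟨x, hx⟩
    simp only at e1 e2
    rw [e1, e2]
    simpa [pj_one] using e0
  -- bundle
  have hprec : ∀ i j k : U, IsPreconnected ((i : Set Y) ∩ j ∩ k) := by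
    intro i j k
    rcases cover_contr hU {i.1, j.1, k.1} ((i : Set Y) ∩ j ∩ k) (by simp [Set.inter_assoc])
      (by intro s hs; simp at hs; rcases hs with rfl | rfl | rfl <;> simp) (by simp) with h | h
    · rw [Set.isEmpty_coe_sort.1 h]; exact isPreconnected_empty
    · exact isPreconnected_iff_preconnectedSpace.2 inferInstance
  obtain ⟨u, θ, n, huc, huL, hθc, hθe, hn⟩ := bundle E.invFun E.invFun.continuous
    (fun i : U => (i : Set Y))
    (fun i => cover_contr hU {i.1} _ (by simp) (by simp) (by simp))
    (fun i j => cover_contr hU {i.1, j.1} _ (by simp)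
      (by intro s hs; simp at hs; rcases hs with rfl | rfl <;> simp) (by simp)) hprec
  have hopen : ∀ i : U, IsOpen (i : Set Y) := fun i => hU.1 i i.2
  have hcovY : ∀ y, ∃ i : U, y ∈ (i : Set Y) := by
    intro y
    have : y ∈ ⋃₀ (U : Set (Set Y)) := by rw [hU.2.1]; trivial
    obtain ⟨s, hs, hy⟩ := this
    exact ⟨⟨s, hs⟩, hy⟩
  have hUne : Nonempty U := ⟨(hcovY (φ x00)).choose⟩
  have hco : ∀ i : U, ∀ x, onS x → φ x ∈ (i : Set Y) → κ x = co (κ x) (u i (φ x)) • u i (φ x) :=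
    fun i x hx hi => (co_spec (hκL x hx) (huL i _ hi)).2
  obtain ⟨r, hr, i, b, e, g1, g2, g3, g4, g5⟩ := step5 (fun i : U => {x | onS x ∧ φ x ∈ (i : Set Y)})
    (fun i x hx => hx.1)
    (by
      rintro i x ⟨hx, hi⟩
      filter_upwards [(hφc x hx).eventually ((hopen i).mem_nhds hi), self_mem_nhdsWithin] with y h1 h2
      exact ⟨h2, h1⟩)
    (by
      intro x hx
      obtain ⟨i, hi⟩ := hcovY (φ x)
      exact ⟨i, hx, hi⟩)
    (by
      rintro i x ⟨hx, hi⟩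
      exact ⟨onS_neg hx, by rwa [hφn x hx]⟩)
    (fun i x => co (κ x) (u i (φ x)))
    (by
      rintro i x ⟨hx, hi⟩
      refine cwa_co (hκc x hx) ?_ (huL i _ hi).ne
      exact ((huc i).continuousAt ((hopen i).mem_nhds hi)).comp_continuousWithinAt (hφc x hx))
    (by
      rintro i x ⟨hx, hi⟩
      exact (co_spec (hκL x hx) (huL i _ hi)).1)
    (by
      rintro i x ⟨hx, hi⟩
      rw [hφn x hx, hκn x hx, co_neg])
    (fun i j x => θ i j (φ x))
    (by
      rintro i j x ⟨hx, hi⟩ ⟨-, hj⟩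
      exact ((hθc i j).continuousAt (((hopen i).inter (hopen j)).mem_nhds
        ⟨hi, hj⟩)).comp_continuousWithinAt (hφc x hx))
    (by
      rintro i j x ⟨hx, hi⟩ ⟨-, hj⟩
      rw [hφn x hx])
    (by
      rintro i j x ⟨hx, hi⟩ ⟨-, hj⟩
      have e1 := hco i x hx hi
      have e2 := hco j x hx hj
      rw [hθe i j _ hi hj, smul_smul, ← hθe i j _ hi hj] at e1
      exact smul_left_injective ℂ (huL j _ hj).ne (e2.symm.trans e1))
    n
    (by
      rintro i j k x ⟨hx, hi⟩ ⟨-, hj⟩ ⟨-, hk⟩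
      exact hn i j k _ hi hj hk)
  refine descend (N := 2 * m + 1) m hm (by omega) (ι := U)
    (fun l => ∃ y, ∀ a ∈ l, y ∈ (a : Set Y)) ?_ (fun i j k => (n i j k : ZMod 2)) ?_
    (by simpa using hlt) i b e r hr g1 ?_ g3 g4 g5
  · rintro l l' hl ⟨y, hy⟩
    exact ⟨y, fun a ha => hy a (hl ha)⟩
  · rintro i j k l ⟨y, hy⟩
    have hi := hy i (by simp)
    have hj := hy j (by simp)
    have hk := hy k (by simp)
    have hl := hy l (by simp)
    have n1 := hn j k l y hj hk hl
    have n2 := hn i k l y hi hk hl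
    have n3 := hn i j l y hi hj hl
    have n4 := hn i j k y hi hj hk
    have hz : n j k l - n i k l + n i j l - n i j k = 0 := by
      have : ((n j k l - n i k l + n i j l - n i j k : ℤ) : ℂ) = ((0 : ℤ) : ℂ) := by
        apply mul_right_cancel₀ Complex.two_pi_I_ne_zero
        push_cast
        linear_combination - n1 + n2 - n3 + n4
      exact_mod_cast this
    have hz2 : ((n j k l - n i k l + n i j l - n i j k : ℤ) : ZMod 2) = 0 := by rw [hz]; simp
    push_cast at hz2
    have t1 := z2_add_self (n i k l : ZMod 2)
    have t2 := z2_add_self (n i j k : ZMod 2)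
    linear_combination hz2 + t1 + t2
  · intro l hl
    rcases l with _ | ⟨x, l⟩
    · exact ⟨φ x00, by simp⟩
    · refine ⟨φ x, fun a ha => ?_⟩
      obtain ⟨y, hy, rfl⟩ := List.mem_map.1 ha
      refine (g2 x y (SL_sub ?_ hl)).2
      intro z hz
      simp only [List.mem_cons, List.not_mem_nil, or_false] at hz
      rcases hz with rfl | rfl
      · simp
      · exact hy

end
end CT

/-- The covering type of complex projective space `ℂP^m` is at least `(m+1)²`: every good
cover of any space homotopy equivalent to `ℂP^m` has at least `(m+1)²` members. -/
theorem stmt14 (m : ℕ) (hm : 1 ≤ m) (Y : Type*) [TopologicalSpace Y]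
    (h : Nonempty (ContinuousMap.HomotopyEquiv (CP m) Y))
    (U : Finset (Set Y)) (hU : IsGoodCover U) :
    (m + 1) ^ 2 ≤ U.card := by
  exact CT.main m hm Y h U hU
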